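/- arXiv:1609.00284 — 4 statements merged into one kernel-verified Lean document; each statement's English description precedes it below -/
import Mathlib

section
/- Let L be a linear forest with k vertices. If G and G' are linear forests with the same number of vertices and the same number of edges, and every connected component of G and of G' has at least k−1 vertices, then s(G, L) = s(G', L). -/
open SimpleGraph

/-- `SameDeck G G' k`: `G` and `G'` have the same `k`-deck, i.e. for every simple graph `H`
on `k` vertices, the number of `k`-element vertex subsets of `G` inducing a subgraph
isomorphic to `H` equals the corresponding number for `G'`. -/
def SameDeck {V W : Type*} [Fintype V] [Fintype W]
    (G : SimpleGraph V) (G' : SimpleGraph W) (k : ℕ) : Prop :=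
  ∀ H : SimpleGraph (Fin k),
    Set.ncard {s : Finset V | s.card = k ∧ Nonempty ((G.induce (↑s : Set V)) ≃g H)} =
    Set.ncard {s : Finset W | s.card = k ∧ Nonempty ((G'.induce (↑s : Set W)) ≃g H)}

/-- `copies G H = s(G,H)`, the number of vertex subsets of `G` whose induced subgraph is
isomorphic to `H`. -/
noncomputable def copies {V W : Type*} [Fintype V]
    (G : SimpleGraph V) (H : SimpleGraph W) : ℕ :=
  Set.ncard {s : Finset V | Nonempty ((G.induce (↑s : Set V)) ≃g H)}

/-- The connected component `c` of `G` is a path on `m` vertices. -/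
def CompIsPath {V : Type*} (G : SimpleGraph V) (c : G.ConnectedComponent) (m : ℕ) : Prop :=
  Nonempty ((G.induce c.supp) ≃g pathGraph m)

/-- The connected component `c` of `G` is a cycle on `m` vertices (`m ≥ 3`). -/
def CompIsCycle {V : Type*} (G : SimpleGraph V) (c : G.ConnectedComponent) (m : ℕ) : Prop :=
  3 ≤ m ∧ Nonempty ((G.induce c.supp) ≃g cycleGraph m)

/-- A linear forest: every connected component is a path. -/
def IsLinearForest {V : Type*} (G : SimpleGraph V) : Prop :=
  ∀ c : G.ConnectedComponent, ∃ m : ℕ, CompIsPath G c m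

/-!
Lay the components of a linear forest side by side on the integer line, with one-point gaps
between them, so that the forest is the subgraph of the line induced on a finite set `A`. Moving a
vertex from one component to the next moves a gap from `d + 1` to `d`, that is, it replaces `A` by
its image under the transposition `(d d+1)`. Given a `k`-set `S ⊆ A`, let `r` be least with
`d - r` and `d + 1 + r` both outside `S`; then `r ≤ k`, and reflecting the part of `S` strictly
between these two points about `d + 1/2` does not change the subgraph induced on `S`. As the
components adjacent to the gap have at least `k - 1` further vertices, the reflected set lies in the
image of `A`, and `r` is unchanged, so this is a bijection between the copies of `L` in `A` and
those in its image. Finally, such moves connect any two forests with equally many vertices and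
components.
-/

section Transfer

variable {β : Type*} {m : ℕ} {f : List ℕ → β}

/-- `f` does not change when a unit is transferred between two consecutive entries of a list both
of which are still at least `m` without that unit. -/
def IsTransferInvariant (m : ℕ) (f : List ℕ → β) : Prop :=
  ∀ (p : List ℕ) (a b : ℕ) (t : List ℕ), m ≤ a → m ≤ b →
    f (p ++ (a + 1) :: b :: t) = f (p ++ a :: (b + 1) :: t)

namespace IsTransferInvariant

theorem comp_cons (hf : IsTransferInvariant m f) (c : ℕ) :
    IsTransferInvariant m fun l => f (c :: l) :=
  fun p => hf (c :: p)

theorem apply_add_cons_cons (hf : IsTransferInvariant m f) {a b : ℕ} (t : List ℕ)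
    (ha : m ≤ a) (hb : m ≤ b) (i : ℕ) : f ((a + i) :: b :: t) = f (a :: (b + i) :: t) := by
  induction i generalizing b with
  | zero => rfl
  | succ i ih =>
    calc f ((a + i + 1) :: b :: t)
      _ = f ((a + i) :: (b + 1) :: t) := hf [] _ _ _ (by lia) hb
      _ = f (a :: (b + 1 + i) :: t) := ih (by lia)
      _ = f (a :: (b + (i + 1)) :: t) := by rw [add_right_comm, add_assoc]

theorem apply_cons_eq_apply_cons (hf : IsTransferInvariant m f) {a a' : ℕ} {t t' : List ℕ}
    (hlen : t.length = t'.length) (hsum : a + t.sum = a' + t'.sum)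
    (h : ∀ x ∈ a :: t, m ≤ x) (h' : ∀ x ∈ a' :: t', m ≤ x) : f (a :: t) = f (a' :: t') := by
  induction t generalizing f a a' t' with
  | nil =>
    obtain rfl := List.length_eq_zero_iff.1 hlen.symm
    rw [show a = a' by simpa using hsum]
  | cons b t ih =>
    obtain ⟨b', t', rfl⟩ := List.exists_cons_of_length_eq_add_one hlen.symm
    simp only [List.mem_cons, forall_eq_or_imp] at h h'
    obtain ⟨i, rfl⟩ := Nat.exists_eq_add_of_le h.1
    obtain ⟨i', rfl⟩ := Nat.exists_eq_add_of_le h'.1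
    rw [hf.apply_add_cons_cons t le_rfl h.2.1, hf.apply_add_cons_cons t' le_rfl h'.2.1]
    refine ih (hf.comp_cons m) (by simpa using hlen) ?_ ?_ ?_
    · simp only [List.sum_cons] at hsum
      lia
    · exact List.forall_mem_cons.2 ⟨by lia, h.2.2⟩
    · exact List.forall_mem_cons.2 ⟨by lia, h'.2.2⟩

theorem apply_eq_apply (hf : IsTransferInvariant m f) {l l' : List ℕ}
    (hlen : l.length = l'.length) (hsum : l.sum = l'.sum)
    (h : ∀ x ∈ l, m ≤ x) (h' : ∀ x ∈ l', m ≤ x) : f l = f l' := by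
  match l, l' with
  | [], [] => rfl
  | a :: t, a' :: t' =>
    exact hf.apply_cons_eq_apply_cons (by simpa using hlen) (by simpa using hsum) h h'

end IsTransferInvariant

end Transfer

section InducedCopies

variable {U V W : Type*}

/-- The vertex sets inside `A` that induce a copy of `L` in `G`. -/
def inducedCopies (G : SimpleGraph V) (A : Finset V) (L : SimpleGraph U) : Set (Finset V) :=
  {S | S ⊆ A ∧ Nonempty (G.induce (↑S : Set V) ≃g L)}

theorem card_of_mem_inducedCopies [Fintype U] {G : SimpleGraph V} {A S : Finset V}
    {L : SimpleGraph U} (hS : S ∈ inducedCopies G A L) : S.card = Fintype.card U := by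
  obtain ⟨-, ⟨e⟩⟩ := hS
  simpa using Fintype.card_congr e.toEquiv

theorem nonempty_induce_iso_induce_map {G : SimpleGraph V} {H : SimpleGraph W} (φ : V ↪ W)
    {S : Finset V} (hφ : ∀ x ∈ S, ∀ y ∈ S, H.Adj (φ x) (φ y) ↔ G.Adj x y) :
    Nonempty (G.induce (↑S : Set V) ≃g H.induce (↑(S.map φ) : Set W)) := by
  refine ⟨⟨(Equiv.Set.image φ S φ.injective).trans (Equiv.setCongr (Finset.coe_map φ S).symm), ?_⟩⟩
  rintro ⟨x, hx⟩ ⟨y, hy⟩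
  exact hφ x hx y hy

theorem copies_eq_ncard_inducedCopies [Fintype V] {G : SimpleGraph V} {H : SimpleGraph W}
    (φ : G ↪g H) (L : SimpleGraph U) :
    copies G L = (inducedCopies H (Finset.univ.map φ.toEmbedding) L).ncard := by
  have iso_map (S : Finset V) :
      Nonempty (G.induce (↑S : Set V) ≃g H.induce (↑(S.map φ.toEmbedding) : Set W)) :=
    nonempty_induce_iso_induce_map φ.toEmbedding fun _ _ _ _ => φ.map_adj_iff
  rw [copies, ← Set.ncard_image_of_injective _ (Finset.map_injective φ.toEmbedding)]
  congr 1
  ext T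
  constructor
  · rintro ⟨S, ⟨e⟩, rfl⟩
    exact ⟨Finset.map_subset_map.2 (Finset.subset_univ S), (iso_map S).map (·.symm.trans e)⟩
  · rintro ⟨hT, ⟨e⟩⟩
    obtain ⟨S, -, rfl⟩ := Finset.subset_map_iff.1 hT
    exact ⟨S, (iso_map S).map (·.trans e), rfl⟩

end InducedCopies

section ConnectedComponents

theorem exists_embedding_of_forall_connectedComponent {V W : Type*} {G : SimpleGraph V}
    {H : SimpleGraph W} (ψ : ∀ c : G.ConnectedComponent, G.induce c.supp ↪g H)
    (separated : Pairwise fun c c' => ∀ u v, ψ c u ≠ ψ c' v ∧ ¬H.Adj (ψ c u) (ψ c' v)) :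
    ∃ φ : G ↪g H, ∀ {c : G.ConnectedComponent} (v : c.supp), φ v = ψ c v := by
  let position (v : V) : W := ψ (G.connectedComponentMk v) ⟨v, rfl⟩
  have position_eq {c : G.ConnectedComponent} (v : c.supp) : position v = ψ c v := by
    obtain ⟨v, rfl⟩ := v
    rfl
  have injective : Function.Injective position := by
    intro u v huv
    by_cases h : G.connectedComponentMk u = G.connectedComponentMk v
    · rw [position_eq ⟨u, h⟩, position_eq ⟨v, rfl⟩] at huv
      exact congrArg Subtype.val ((ψ _).injective huv)
    · exact ((separated h _ _).1 huv).elim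
  have adj_iff {u v : V} : H.Adj (position u) (position v) ↔ G.Adj u v := by
    by_cases h : G.connectedComponentMk u = G.connectedComponentMk v
    · rw [position_eq ⟨u, h⟩, position_eq ⟨v, rfl⟩, (ψ _).map_adj_iff, induce_adj]
    · exact iff_of_false (separated h _ _).2 fun huv =>
        h (ConnectedComponent.connectedComponentMk_eq_of_adj huv)
  exact ⟨⟨⟨position, injective⟩, adj_iff⟩, position_eq⟩

end ConnectedComponents

section Line

theorem hasse_int_adj {x y : ℤ} : (hasse ℤ).Adj x y ↔ x + 1 = y ∨ y + 1 = x := by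
  simp only [hasse_adj, Order.covBy_iff_add_one_eq]

/-- The path `pathGraph n` placed on the integer line with its first vertex at `o`. -/
def pathGraphEmbeddingHasseInt (o : ℤ) (n : ℕ) : pathGraph n ↪g hasse ℤ where
  toFun i := o + i.val
  inj' i j h := Fin.ext (by simpa using h)
  map_rel_iff' {i j} := by
    change (hasse ℤ).Adj (o + i.val) (o + j.val) ↔ _
    rw [hasse_int_adj, pathGraph_adj]
    omega

theorem pathGraphEmbeddingHasseInt_apply (o : ℤ) {n : ℕ} (i : Fin n) :
    pathGraphEmbeddingHasseInt o n i = o + i.val :=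
  rfl

theorem ncard_edgeSet_of_embedding_hasse_int {V : Type*} [Fintype V] {G : SimpleGraph V}
    (φ : G ↪g hasse ℤ) {A : Finset ℤ} (hA : Finset.univ.map φ.toEmbedding = A) :
    G.edgeSet.ncard = {x ∈ A | x + 1 ∈ A}.card := by
  have mem_A (x : ℤ) : x ∈ A ↔ ∃ v, φ v = x := by simp [← hA]
  have edge_injective : Function.Injective fun x : ℤ => s(x, x + 1) := by
    intro x y h
    simp only [Sym2.eq_iff] at h
    lia
  rw [← Set.ncard_coe_finset, ← Set.ncard_image_of_injective _ edge_injective,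
    ← Set.ncard_image_of_injective _ (Sym2.map.injective φ.injective)]
  congr 1
  ext z
  constructor
  · rintro ⟨⟨u, v⟩, huv, rfl⟩
    rcases hasse_int_adj.1 (φ.map_adj_iff.2 huv) with h | h
    · exact ⟨φ u, by simp [mem_A, h], by simp [h]⟩
    · exact ⟨φ v, by simp [mem_A, h], by simp [h, Sym2.eq_swap]⟩
  · rintro ⟨x, hx, rfl⟩
    simp only [Finset.coe_filter, Set.mem_ofPred_eq, mem_A] at hx
    obtain ⟨⟨u, rfl⟩, v, hv⟩ := hx
    exact ⟨s(u, v), φ.map_adj_iff.1 (hasse_int_adj.2 (.inl hv.symm)), by simp [hv]⟩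

end Line

section WindowFlip

variable {U : Type*} (d : ℤ) (S : Finset ℤ)

/-- The permutation of `ℤ` that reflects the open interval from `d - r` to `d + 1 + r` about its
midpoint `d + 1/2` and fixes every other point. -/
def windowReflection (r : ℕ) : Equiv.Perm ℤ :=
  Function.Involutive.toPerm
    (fun x => if d - r < x ∧ x < d + 1 + r then 2 * d + 1 - x else x)
    (fun x => by dsimp only; split_ifs <;> lia)

theorem windowReflection_apply (r : ℕ) (x : ℤ) :
    windowReflection d r x = if d - r < x ∧ x < d + 1 + r then 2 * d + 1 - x else x :=
  rfl

theorem windowReflection_involutive (r : ℕ) : Function.Involutive (windowReflection d r) :=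
  Function.Involutive.toPerm_involutive _

theorem windowReflection_symm (r : ℕ) : (windowReflection d r).symm = windowReflection d r :=
  rfl

theorem exists_le_card_notMem_notMem : ∃ j ≤ S.card, d - j ∉ S ∧ d + 1 + j ∉ S := by
  by_contra! h
  have card_le : (Finset.range (S.card + 1)).card ≤ S.card := by
    refine Finset.card_le_card_of_injOn
      (fun j : ℕ => if d - j ∈ S then d - j else d + 1 + j) (fun j hj => ?_) (fun i _ j _ hij => ?_)
    · have := h j (Nat.lt_succ_iff.1 (Finset.mem_range.1 hj))
      dsimp only
      split_ifs with hjS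
      exacts [hjS, this hjS]
    · dsimp only at hij
      split_ifs at hij <;> lia
  simp at card_le

theorem exists_notMem_notMem : ∃ j : ℕ, d - j ∉ S ∧ d + 1 + j ∉ S :=
  (exists_le_card_notMem_notMem d S).imp fun _ => And.right

/-- The least `r` such that neither endpoint of the interval from `d - r` to `d + 1 + r` is
in `S`. -/
noncomputable def freeRadius : ℕ :=
  Nat.find (exists_notMem_notMem d S)

theorem sub_freeRadius_notMem : d - freeRadius d S ∉ S :=
  (Nat.find_spec (exists_notMem_notMem d S)).1

theorem add_freeRadius_notMem : d + 1 + freeRadius d S ∉ S :=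
  (Nat.find_spec (exists_notMem_notMem d S)).2

theorem freeRadius_le_card : freeRadius d S ≤ S.card :=
  let ⟨_, hj, hjS⟩ := exists_le_card_notMem_notMem d S
  (Nat.find_min' (exists_notMem_notMem d S) hjS).trans hj

/-- The image of `S` under the reflection of its window, the interval around `d + 1/2` bounded by
the first symmetric pair of points missing from `S`. -/
noncomputable def windowFlip : Finset ℤ :=
  S.map (windowReflection d (freeRadius d S)).toEmbedding

theorem mem_windowFlip {x : ℤ} :
    x ∈ windowFlip d S ↔ windowReflection d (freeRadius d S) x ∈ S := by
  rw [windowFlip, Finset.mem_map_equiv, windowReflection_symm]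

theorem notMem_notMem_windowFlip_iff {j : ℕ} (hj : j ≤ freeRadius d S) :
    d - j ∉ windowFlip d S ∧ d + 1 + j ∉ windowFlip d S ↔ d - j ∉ S ∧ d + 1 + j ∉ S := by
  simp only [mem_windowFlip, windowReflection_apply]
  rcases hj.lt_or_eq with hlt | rfl
  · rw [if_pos (by lia), if_pos (by lia), show 2 * d + 1 - (d - j) = d + 1 + j by ring,
      show 2 * d + 1 - (d + 1 + j) = d - j by ring, and_comm]
  · rw [if_neg (by lia), if_neg (by lia)]

theorem freeRadius_windowFlip : freeRadius d (windowFlip d S) = freeRadius d S := by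
  refine (Nat.find_eq_iff _).2 ⟨?_, fun j hj => ?_⟩
  · exact (notMem_notMem_windowFlip_iff d S le_rfl).2
      ⟨sub_freeRadius_notMem d S, add_freeRadius_notMem d S⟩
  · rw [notMem_notMem_windowFlip_iff d S hj.le]
    exact Nat.find_min _ hj

theorem windowFlip_involutive : Function.Involutive (windowFlip d) := by
  intro S
  ext x
  rw [mem_windowFlip, mem_windowFlip, freeRadius_windowFlip, windowReflection_involutive d _ x]

theorem nonempty_induce_iso_induce_windowFlip :
    Nonempty ((hasse ℤ).induce (↑S : Set ℤ) ≃g (hasse ℤ).induce (↑(windowFlip d S) : Set ℤ)) := by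
  refine nonempty_induce_iso_induce_map _ fun x hx y hy => ?_
  have ne_left {z : ℤ} (hz : z ∈ S) : z ≠ d - freeRadius d S :=
    ne_of_mem_of_not_mem hz (sub_freeRadius_notMem d S)
  have ne_right {z : ℤ} (hz : z ∈ S) : z ≠ d + 1 + freeRadius d S :=
    ne_of_mem_of_not_mem hz (add_freeRadius_notMem d S)
  have := ne_left hx
  have := ne_right hx
  have := ne_left hy
  have := ne_right hy
  simp only [Equiv.coe_toEmbedding, windowReflection_apply, hasse_int_adj]
  split_ifs <;> lia

variable {d} {A : Finset ℤ} {L : SimpleGraph U}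

theorem swap_mem_of_mem_windowFlip {S : Finset ℤ} {k : ℕ} (hSA : S ⊆ A) (hk : S.card ≤ k)
    (hA : ∀ x, d - k < x → x < d + 1 + k → x ≠ d → x ≠ d + 1 → x ∈ A)
    {x : ℤ} (hx : x ∈ windowFlip d S) : Equiv.swap d (d + 1) x ∈ A := by
  have radius_le := (freeRadius_le_card d S).trans hk
  have left_notMem := sub_freeRadius_notMem d S
  have right_notMem := add_freeRadius_notMem d S
  rw [mem_windowFlip, windowReflection_apply] at hx
  split_ifs at hx with hwindow
  · obtain rfl | hxd := eq_or_ne x d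
    · rw [Equiv.swap_apply_left]
      convert! hSA hx using 1
      ring
    obtain rfl | hxd' := eq_or_ne x (d + 1)
    · rw [Equiv.swap_apply_right]
      convert! hSA hx using 1
      ring
    rw [Equiv.swap_apply_of_ne_of_ne hxd hxd']
    exact hA x (by lia) (by lia) hxd hxd'
  · have hxd : x ≠ d := by grind
    have hxd' : x ≠ d + 1 := by grind
    rw [Equiv.swap_apply_of_ne_of_ne hxd hxd']
    exact hSA hx

theorem mapsTo_windowFlip_inducedCopies [Fintype U]
    (hA : ∀ x, d - Fintype.card U < x → x < d + 1 + Fintype.card U → x ≠ d → x ≠ d + 1 → x ∈ A) :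
    Set.MapsTo (windowFlip d) (inducedCopies (hasse ℤ) A L)
      (inducedCopies (hasse ℤ) (A.map (Equiv.swap d (d + 1)).toEmbedding) L) := by
  rintro S hS
  refine ⟨fun x hx => ?_, ?_⟩
  · rw [Finset.mem_map_equiv, Equiv.symm_swap]
    exact swap_mem_of_mem_windowFlip hS.1 (card_of_mem_inducedCopies hS).le hA hx
  · obtain ⟨-, ⟨e⟩⟩ := hS
    exact (nonempty_induce_iso_induce_windowFlip d S).map (·.symm.trans e)

theorem ncard_inducedCopies_map_swap [Fintype U]
    (hA : ∀ x, d - Fintype.card U < x → x < d + 1 + Fintype.card U → x ≠ d → x ≠ d + 1 → x ∈ A) :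
    (inducedCopies (hasse ℤ) (A.map (Equiv.swap d (d + 1)).toEmbedding) L).ncard =
      (inducedCopies (hasse ℤ) A L).ncard := by
  set A' := A.map (Equiv.swap d (d + 1)).toEmbedding with hA'
  have map_swap_A' : A'.map (Equiv.swap d (d + 1)).toEmbedding = A := by
    ext x
    simp [hA']
  have window_subset_A' (x : ℤ) (hl : d - Fintype.card U < x) (hr : x < d + 1 + Fintype.card U)
      (hxd : x ≠ d) (hxd' : x ≠ d + 1) : x ∈ A' := by
    rw [hA', Finset.mem_map_equiv, Equiv.symm_swap, Equiv.swap_apply_of_ne_of_ne hxd hxd']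
    exact hA x hl hr hxd hxd'
  have mapsTo_A := mapsTo_windowFlip_inducedCopies (L := L) window_subset_A'
  rw [map_swap_A'] at mapsTo_A
  have involutive := windowFlip_involutive d
  have bijOn : Set.BijOn (windowFlip d) (inducedCopies (hasse ℤ) A L)
      (inducedCopies (hasse ℤ) A' L) :=
    Set.InvOn.bijOn ⟨fun S _ => involutive S, fun S _ => involutive S⟩
      (mapsTo_windowFlip_inducedCopies hA) mapsTo_A
  rw [← bijOn.image_eq, Set.ncard_image_of_injective _ involutive.injective]

end WindowFlip

section Blocks

/-- Consecutive intervals of integers of lengths given by the list, the first starting at `o` and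
any two neighbours separated by a single missing integer. In the graph `hasse ℤ`, it induces the
linear forest whose path components have these lengths. -/
noncomputable def blocks : ℤ → List ℕ → Finset ℤ
  | _, [] => ∅
  | o, m :: l => Finset.Ico o (o + m) ∪ blocks (o + m + 1) l

theorem mem_blocks_cons {o x : ℤ} {m : ℕ} {l : List ℕ} :
    x ∈ blocks o (m :: l) ↔ (o ≤ x ∧ x < o + m) ∨ x ∈ blocks (o + m + 1) l := by
  rw [blocks, Finset.mem_union, Finset.mem_Ico]

theorem le_of_mem_blocks {o x : ℤ} {l : List ℕ} (hx : x ∈ blocks o l) : o ≤ x := by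
  induction l generalizing o with
  | nil => simp [blocks] at hx
  | cons m l ih =>
    rcases mem_blocks_cons.1 hx with h | h
    · exact h.1
    · linarith [ih h]

theorem lt_of_mem_blocks {o x : ℤ} {l : List ℕ} (hx : x ∈ blocks o l) :
    x < o + l.sum + l.length := by
  induction l generalizing o with
  | nil => simp [blocks] at hx
  | cons m l ih =>
    rw [List.sum_cons, List.length_cons]
    rcases mem_blocks_cons.1 hx with h | h
    · lia
    · have := ih h
      lia

theorem blocks_append (o : ℤ) (p l : List ℕ) :
    blocks o (p ++ l) = blocks o p ∪ blocks (o + p.sum + p.length) l := by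
  induction p generalizing o with
  | nil => simp [blocks]
  | cons m p ih =>
    rw [List.cons_append, blocks, ih, blocks, Finset.union_assoc]
    congr 3
    rw [List.sum_cons, List.length_cons]
    lia

theorem disjoint_Ico_blocks (o : ℤ) (m : ℕ) (l : List ℕ) :
    Disjoint (Finset.Ico o (o + m)) (blocks (o + m + 1) l) := by
  rw [Finset.disjoint_left]
  intro x hx hx'
  linarith [(Finset.mem_Ico.1 hx).2, le_of_mem_blocks hx']

theorem card_blocks (o : ℤ) (l : List ℕ) : (blocks o l).card = l.sum := by
  induction l generalizing o with
  | nil => rfl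
  | cons m l ih =>
    rw [blocks, Finset.card_union_of_disjoint (disjoint_Ico_blocks o m l), ih]
    simp

theorem filter_add_one_mem_blocks_cons (o : ℤ) (m : ℕ) (l : List ℕ) :
    {x ∈ blocks o (m :: l) | x + 1 ∈ blocks o (m :: l)} =
      Finset.Ico o (o + m - 1) ∪ {x ∈ blocks (o + m + 1) l | x + 1 ∈ blocks (o + m + 1) l} := by
  ext x
  have ge_of_mem : x ∈ blocks (o + m + 1) l → o + m + 1 ≤ x := le_of_mem_blocks
  have ge_of_succ_mem : x + 1 ∈ blocks (o + m + 1) l → o + m + 1 ≤ x + 1 := le_of_mem_blocks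
  simp only [mem_blocks_cons, Finset.mem_filter, Finset.mem_union, Finset.mem_Ico]
  grind

theorem card_filter_add_one_mem_blocks_add_length (o : ℤ) {l : List ℕ} (hl : ∀ m ∈ l, 0 < m) :
    {x ∈ blocks o l | x + 1 ∈ blocks o l}.card + l.length = l.sum := by
  induction l generalizing o with
  | nil => rfl
  | cons m l ih =>
    obtain ⟨hm, hl⟩ := List.forall_mem_cons.1 hl
    have disjoint : Disjoint (Finset.Ico o (o + m - 1))
        {x ∈ blocks (o + m + 1) l | x + 1 ∈ blocks (o + m + 1) l} :=
      (disjoint_Ico_blocks o m l).mono (Finset.Ico_subset_Ico_right (by lia))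
        (Finset.filter_subset _ _)
    rw [filter_add_one_mem_blocks_cons, Finset.card_union_of_disjoint disjoint, Int.card_Ico,
      List.length_cons, List.sum_cons, ← ih (o + m + 1) hl]
    lia

theorem map_swap_blocks (o : ℤ) (p : List ℕ) (a b : ℕ) (t : List ℕ) {d : ℤ}
    (hd : d = o + p.sum + p.length + a) :
    (blocks o (p ++ (a + 1) :: b :: t)).map (Equiv.swap d (d + 1)).toEmbedding =
      blocks o (p ++ a :: (b + 1) :: t) := by
  ext x
  have lt_of_mem_p {y : ℤ} : y ∈ blocks o p → y < d - a := fun h => by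
    linarith [lt_of_mem_blocks h]
  have le_of_mem_t {y : ℤ} : y ∈ blocks (d + b + 3) t → d + b + 3 ≤ y := le_of_mem_blocks
  have start_p : o + p.sum + p.length = d - a := by lia
  have start_t : d - a + ((a + 1 : ℕ) : ℤ) + 1 + b + 1 = d + b + 3 := by push_cast; ring
  have start_t' : d - a + (a : ℤ) + 1 + ((b + 1 : ℕ) : ℤ) + 1 = d + b + 3 := by push_cast; ring
  simp only [Finset.mem_map_equiv, Equiv.symm_swap, blocks_append, Finset.mem_union,
    mem_blocks_cons, start_p, start_t, start_t', Equiv.swap_apply_def]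
  grind

theorem mem_blocks_of_near_gap (o : ℤ) (p : List ℕ) {a b k : ℕ} (t : List ℕ) {d x : ℤ}
    (hd : d = o + p.sum + p.length + a) (ha : k - 1 ≤ a) (hb : k - 1 ≤ b)
    (hl : d - k < x) (hr : x < d + 1 + k) (hxd' : x ≠ d + 1) :
    x ∈ blocks o (p ++ (a + 1) :: b :: t) := by
  simp only [blocks_append, Finset.mem_union, mem_blocks_cons]
  lia

theorem isTransferInvariant_ncard_inducedCopies_blocks {U : Type*} [Fintype U]
    (L : SimpleGraph U) (o : ℤ) :
    IsTransferInvariant (Fintype.card U - 1)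
      fun l => (inducedCopies (hasse ℤ) (blocks o l) L).ncard := by
  intro p a b t ha hb
  dsimp only
  rw [← map_swap_blocks o p a b t rfl, ncard_inducedCopies_map_swap]
  exact fun x hl hr _ hxd' => mem_blocks_of_near_gap o p t rfl ha hb hl hr hxd'

theorem exists_offsets_of_blocks {α : Type*} (size : α → ℕ) {cs : List α} (hcs : cs.Nodup)
    (o : ℤ) :
    ∃ offset : α → ℤ, (∀ c ∈ cs, o ≤ offset c) ∧
      (∀ c ∈ cs, ∀ c' ∈ cs, c ≠ c' →
        offset c + size c + 1 ≤ offset c' ∨ offset c' + size c' + 1 ≤ offset c) ∧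
      ∀ x, x ∈ blocks o (cs.map size) ↔ ∃ c ∈ cs, offset c ≤ x ∧ x < offset c + size c := by
  classical
  induction cs generalizing o with
  | nil => exact ⟨fun _ => o, by simp, by simp, by simp [blocks]⟩
  | cons c cs ih =>
    obtain ⟨hc, hcs⟩ := List.nodup_cons.1 hcs
    obtain ⟨offset, ge, separated, mem_iff⟩ := ih hcs (o + size c + 1)
    have update_eq {c' : α} (h : c' ∈ cs) : Function.update offset c o c' = offset c' :=
      Function.update_of_ne (ne_of_mem_of_not_mem h hc) _ _
    refine ⟨Function.update offset c o, ?_, ?_, fun x => ?_⟩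
    · grind
    · grind
    · grind [mem_blocks_cons]

end Blocks

namespace IsLinearForest

variable {V : Type*} {G : SimpleGraph V}

theorem nonempty_iso_pathGraph_ncard (hG : IsLinearForest G) (c : G.ConnectedComponent) :
    Nonempty (G.induce c.supp ≃g pathGraph c.supp.ncard) := by
  obtain ⟨m, ⟨e⟩⟩ := hG c
  have ncard_eq : c.supp.ncard = m := by
    rw [← Nat.card_coe_set_eq, Nat.card_congr e.toEquiv, Nat.card_fin]
  exact ncard_eq ▸ ⟨e⟩

theorem exists_embedding_of_offsets (hG : IsLinearForest G) (offset : G.ConnectedComponent → ℤ)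
    (separated : Pairwise fun c c' => offset c + c.supp.ncard + 1 ≤ offset c' ∨
      offset c' + c'.supp.ncard + 1 ≤ offset c) :
    ∃ φ : G ↪g hasse ℤ, ∀ x, (∃ v, φ v = x) ↔
      ∃ c : G.ConnectedComponent, offset c ≤ x ∧ x < offset c + c.supp.ncard := by
  have e (c : G.ConnectedComponent) : G.induce c.supp ≃g pathGraph c.supp.ncard :=
    (hG.nonempty_iso_pathGraph_ncard c).some
  obtain ⟨φ, φ_apply⟩ := exists_embedding_of_forall_connectedComponent
    (fun c => (pathGraphEmbeddingHasseInt (offset c) _).comp (e c).toEmbedding)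
    fun c c' hne u v => by
      have := separated hne
      have := (e c u).isLt
      have := (e c' v).isLt
      simp only [RelEmbedding.coe_trans, Function.comp_apply, RelIso.coe_toRelEmbedding,
        pathGraphEmbeddingHasseInt_apply, hasse_int_adj]
      lia
  refine ⟨φ, fun x => ⟨?_, ?_⟩⟩
  · rintro ⟨v, rfl⟩
    have := (e (G.connectedComponentMk v) ⟨v, rfl⟩).isLt
    refine ⟨G.connectedComponentMk v, ?_⟩
    rw [φ_apply ⟨v, rfl⟩]
    simp only [RelEmbedding.coe_trans, Function.comp_apply, RelIso.coe_toRelEmbedding,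
      pathGraphEmbeddingHasseInt_apply]
    lia
  · rintro ⟨c, hl, hr⟩
    refine ⟨(e c).symm ⟨(x - offset c).toNat, by lia⟩, ?_⟩
    rw [φ_apply]
    simp only [RelEmbedding.coe_trans, Function.comp_apply, RelIso.coe_toRelEmbedding,
      RelIso.apply_symm_apply, pathGraphEmbeddingHasseInt_apply]
    lia

theorem exists_embedding_map_eq_blocks [Fintype V] (hG : IsLinearForest G) :
    ∃ (l : List ℕ) (φ : G ↪g hasse ℤ), (∀ m ∈ l, ∃ c : G.ConnectedComponent, c.supp.ncard = m) ∧
      Finset.univ.map φ.toEmbedding = blocks 0 l := by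
  classical
  let components := (Finset.univ : Finset G.ConnectedComponent).toList
  have mem_components (c : G.ConnectedComponent) : c ∈ components := by simp [components]
  obtain ⟨offset, -, separated, mem_iff⟩ := exists_offsets_of_blocks
    (fun c : G.ConnectedComponent => c.supp.ncard) (Finset.nodup_toList Finset.univ) 0
  obtain ⟨φ, mem_range_iff⟩ := hG.exists_embedding_of_offsets offset fun c c' =>
    separated c (mem_components c) c' (mem_components c')
  refine ⟨components.map fun c => c.supp.ncard, φ, by simp [components], ?_⟩
  ext x
  rw [mem_iff]
  simpa [components] using mem_range_iff x

theorem exists_embedding_map_eq_blocks_and_length_eq [Fintype V] (hG : IsLinearForest G) :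
    ∃ (l : List ℕ) (φ : G ↪g hasse ℤ), Finset.univ.map φ.toEmbedding = blocks 0 l ∧
      l.sum = Fintype.card V ∧ G.edgeSet.ncard + l.length = Fintype.card V ∧
      ∀ m ∈ l, ∃ c : G.ConnectedComponent, c.supp.ncard = m := by
  obtain ⟨l, φ, mem_l, map_eq⟩ := hG.exists_embedding_map_eq_blocks
  have sum_eq : l.sum = Fintype.card V := by
    rw [← card_blocks 0 l, ← map_eq, Finset.card_map, Finset.card_univ]
  have pos_of_mem (m : ℕ) (hm : m ∈ l) : 0 < m := by
    obtain ⟨c, rfl⟩ := mem_l m hm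
    exact (Set.ncard_pos (Set.toFinite _)).2 c.nonempty_supp
  refine ⟨l, φ, map_eq, sum_eq, ?_, mem_l⟩
  rw [ncard_edgeSet_of_embedding_hasse_int φ map_eq,
    card_filter_add_one_mem_blocks_add_length 0 pos_of_mem, sum_eq]

end IsLinearForest

theorem stmt_10_general {U V W : Type*} [Fintype U] [Fintype V] [Fintype W]
    (L : SimpleGraph U) (G : SimpleGraph V) (G' : SimpleGraph W)
    (hGlf : IsLinearForest G) (hG'lf : IsLinearForest G')
    (hcard : Fintype.card V = Fintype.card W)
    (hedges : G.edgeSet.ncard = G'.edgeSet.ncard)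
    (hG : ∀ c : G.ConnectedComponent, Fintype.card U - 1 ≤ c.supp.ncard)
    (hG' : ∀ c : G'.ConnectedComponent, Fintype.card U - 1 ≤ c.supp.ncard) :
    copies G L = copies G' L := by
  obtain ⟨l, φ, map_eq, sum_eq, length_eq, mem_l⟩ :=
    hGlf.exists_embedding_map_eq_blocks_and_length_eq
  obtain ⟨l', φ', map_eq', sum_eq', length_eq', mem_l'⟩ :=
    hG'lf.exists_embedding_map_eq_blocks_and_length_eq
  rw [copies_eq_ncard_inducedCopies φ, copies_eq_ncard_inducedCopies φ', map_eq, map_eq']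
  refine (isTransferInvariant_ncard_inducedCopies_blocks L 0).apply_eq_apply
    (by lia) (by lia) (fun m hm => ?_) (fun m hm => ?_)
  · obtain ⟨c, rfl⟩ := mem_l m hm
    exact hG c
  · obtain ⟨c, rfl⟩ := mem_l' m hm
    exact hG' c

/-- If `L` is a linear forest with `k` vertices, and `G, G'` are linear
forests with the same number of vertices and edges whose components all have at least
`k-1` vertices, then `s(G,L) = s(G',L)`. -/
theorem stmt_10 {V W : Type*} [Fintype V] [Fintype W] (k : ℕ)
    (L : SimpleGraph (Fin k)) (hL : IsLinearForest L)
    (G : SimpleGraph V) (G' : SimpleGraph W)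
    (hGlf : IsLinearForest G) (hG'lf : IsLinearForest G')
    (hcard : Fintype.card V = Fintype.card W)
    (hedges : G.edgeSet.ncard = G'.edgeSet.ncard)
    (hG : ∀ c : G.ConnectedComponent, k - 1 ≤ c.supp.ncard)
    (hG' : ∀ c : G'.ConnectedComponent, k - 1 ≤ c.supp.ncard) :
    copies G L = copies G' L :=
  stmt_10_general L G G' hGlf hG'lf hcard hedges (by simpa using hG) (by simpa using hG')
end

section
/- Let k ∈ ℕ. If G and G' are linear forests with the same number of vertices and the same number of edges, and every connected component of G and of G' has at least k−1 vertices, then G and G' have the same k-deck. -/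
open SimpleGraph

/-!
A homomorphism from a connected graph `F` on at most `q + 1` vertices to a path on at least `q + 2`
vertices cannot reach both ends. By inclusion–exclusion over the two ends, the number of
homomorphisms from `F` to the path on `m` vertices has zero second difference, hence is affine in
`m`, for `m ≥ q`. Summing over components, the number of homomorphisms from `F` to a linear forest
whose components all have at least `q` vertices depends only on the numbers of vertices and of
components of the forest; the case where `F` is an edge shows that the number of components is
determined by the numbers of vertices and edges. With `q = k - 1`, the two forests receive equally
many homomorphisms from every connected graph on at most `k` vertices, and by multiplicativity from
every graph on at most `k` vertices. Möbius inversion turns these homomorphism counts into counts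
of induced subgraphs.
-/

section FiberCounting

variable {α β L : Type*} [Finite α] [Finite β] [PartialOrder L]

theorem card_le_eq_sum_card_fiber [LocallyFiniteOrderTop L] (P : α → L) (x : L) :
    Nat.card {a // x ≤ P a} = ∑ y ∈ Finset.Ici x, Nat.card {a // P a = y} := by
  classical
  have := Fintype.ofFinite α
  simp only [Nat.card_eq_fintype_card, Fintype.card_subtype]
  rw [Finset.card_eq_sum_card_fiberwise (f := P) (t := Finset.Ici x)
    fun a ha => by simpa using ha]
  refine Finset.sum_congr rfl fun y hy => congrArg Finset.card ?_
  ext a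
  have := Finset.mem_Ici.1 hy
  grind

theorem card_fiber_eq_of_card_le_eq [Finite L] [OrderTop L] {P : α → L} {Q : β → L}
    (h : ∀ x, Nat.card {a // x ≤ P a} = Nat.card {b // x ≤ Q b}) (x : L) :
    Nat.card {a // P a = x} = Nat.card {b // Q b = x} := by
  classical
  have := Fintype.ofFinite L
  let := Fintype.toLocallyFiniteOrder (α := L)
  have hP := IncidenceAlgebra.moebius_inversion_top (fun y => (Nat.card {a // P a = y} : ℤ))
    (fun y => Nat.card {a // y ≤ P a}) (fun y => mod_cast card_le_eq_sum_card_fiber P y) x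
  have hQ := IncidenceAlgebra.moebius_inversion_top (fun y => (Nat.card {b // Q b = y} : ℤ))
    (fun y => Nat.card {b // y ≤ Q b}) (fun y => mod_cast card_le_eq_sum_card_fiber Q y) x
  simp only [h] at hP
  exact_mod_cast hP.trans hQ.symm

end FiberCounting

section HomCounting

variable {U V W : Type*} {F : SimpleGraph U} {G : SimpleGraph V} {G' : SimpleGraph W}

theorem card_hom_range_subset_range (e : G ↪g G') :
    Nat.card {f : F →g G' // Set.range f ⊆ Set.range e} = Nat.card (F →g G) := by
  refine (Nat.card_congr (Equiv.ofBijective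
    (fun f : F →g G => ⟨e.toHom.comp f, ?range⟩) ⟨?injective, ?surjective⟩)).symm
  case range =>
    rintro _ ⟨v, rfl⟩
    exact ⟨f v, rfl⟩
  case injective =>
    intro f g hfg
    ext v
    exact e.injective (DFunLike.congr_fun (congrArg Subtype.val hfg) v)
  case surjective =>
    rintro ⟨f, hf⟩
    choose g hg using fun v => hf ⟨v, rfl⟩
    refine ⟨⟨g, fun {v w} hvw => e.map_adj_iff.1 ?_⟩, Subtype.ext (DFunLike.ext _ _ hg)⟩
    rw [hg, hg]
    exact f.map_adj hvw

theorem card_hom_eq_prod_connectedComponent [Fintype F.ConnectedComponent] :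
    Nat.card (F →g G) = ∏ c : F.ConnectedComponent, Nat.card (c.toSimpleGraph →g G) := by
  rw [← Nat.card_pi]
  refine Nat.card_congr
    { toFun := fun f c => f.comp c.toSimpleGraph_hom
      invFun := F.homOfConnectedComponents
      left_inv := fun f => rfl
      right_inv := fun g => ?_ }
  funext c
  ext ⟨v, rfl⟩
  rfl

theorem connectedComponentMk_hom_eq (hF : F.Connected) (f : F →g G) (v w : U) :
    G.connectedComponentMk (f v) = G.connectedComponentMk (f w) :=
  ConnectedComponent.sound ((hF.preconnected v w).map f)

theorem card_hom_eq_sum_connectedComponent [Finite U] [Finite V] (hF : F.Connected)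
    [Fintype G.ConnectedComponent] :
    Nat.card (F →g G) = ∑ c : G.ConnectedComponent, Nat.card (F →g c.toSimpleGraph) := by
  obtain ⟨r⟩ := hF.nonempty
  rw [← Nat.card_congr (Equiv.sigmaFiberEquiv fun f : F →g G => G.connectedComponentMk (f r)),
    Nat.card_sigma]
  refine Finset.sum_congr rfl fun c _ => ?_
  refine Eq.trans ?_ (card_hom_range_subset_range (Embedding.induce c.supp))
  refine Nat.card_congr (Equiv.subtypeEquivRight fun f => ⟨?_, fun h => ?_⟩)
  · rintro hr _ ⟨v, rfl⟩
    exact ⟨⟨f v, (connectedComponentMk_hom_eq hF f v r).trans hr⟩, rfl⟩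
  · obtain ⟨v, hv⟩ := h ⟨r, rfl⟩
    exact hv ▸ v.2

theorem card_hom_top_fin_two [Finite V] :
    Nat.card ((⊤ : SimpleGraph (Fin 2)) →g G) = 2 * G.edgeSet.ncard := by
  classical
  have := Fintype.ofFinite V
  rw [Set.ncard_eq_toFinset_card', ← edgeFinset, ← dart_card_eq_twice_card_edges,
    ← Nat.card_eq_fintype_card]
  refine Nat.card_congr
    { toFun := fun f => ⟨(f 0, f 1), f.map_adj (by simp)⟩
      invFun := fun d => ⟨![d.fst, d.snd], ?_⟩
      left_inv := fun f => ?_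
      right_inv := fun d => rfl }
  · simp [Fin.forall_fin_two, d.adj, d.adj.symm]
  · ext i
    fin_cases i <;> rfl

end HomCounting

section PathGraph

/-- The path on `m` vertices as the initial segment of the path on `m + 1` vertices. -/
def pathGraphCastSucc (m : ℕ) : pathGraph m ↪g pathGraph (m + 1) where
  toEmbedding := Fin.castSuccEmb
  map_rel_iff' := by simp [pathGraph_adj]

/-- The path on `m` vertices as the final segment of the path on `m + 1` vertices. -/
def pathGraphSucc (m : ℕ) : pathGraph m ↪g pathGraph (m + 1) where
  toEmbedding := Fin.succEmb m
  map_rel_iff' := by simp [pathGraph_adj]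

theorem val_le_val_add_length_of_pathGraph_walk {m : ℕ} {u v : Fin m} (p : (pathGraph m).Walk u v) :
    (v : ℕ) ≤ u + p.length := by
  induction p with
  | nil => simp
  | cons h p ih =>
    rw [pathGraph_adj] at h
    rw [Walk.length_cons]
    omega

variable {U : Type*} [Finite U] {F : SimpleGraph U}

theorem range_pathGraphCastSucc (m : ℕ) :
    Set.range (pathGraphCastSucc m) = {Fin.last m}ᶜ :=
  Set.ext fun _ => Fin.exists_castSucc_eq

theorem range_pathGraphSucc (m : ℕ) : Set.range (pathGraphSucc m) = {0}ᶜ :=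
  Fin.range_succ m

theorem range_pathGraphCastSucc_comp_pathGraphSucc (m : ℕ) :
    Set.range ((pathGraphCastSucc (m + 1)).comp (pathGraphSucc m)) =
      Set.range (pathGraphCastSucc (m + 1)) ∩ Set.range (pathGraphSucc (m + 1)) := by
  have hzero : pathGraphCastSucc (m + 1) 0 = 0 := rfl
  have hcomp := Set.range_comp (pathGraphCastSucc (m + 1)) (pathGraphSucc m)
  rw [range_pathGraphSucc, Set.image_compl_eq_range_sdiff_image (pathGraphCastSucc _).injective,
    Set.image_singleton, hzero, Set.sdiff_eq] at hcomp
  rwa [range_pathGraphSucc]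

theorem range_hom_subset_castSucc_or_succ (hF : F.Connected) {m : ℕ}
    (hm : Nat.card U ≤ m + 1) (f : F →g pathGraph (m + 2)) :
    Set.range f ⊆ Set.range (pathGraphCastSucc (m + 1)) ∨
      Set.range f ⊆ Set.range (pathGraphSucc (m + 1)) := by
  classical
  have := Fintype.ofFinite U
  rw [range_pathGraphCastSucc, range_pathGraphSucc, Set.subset_compl_singleton_iff,
    Set.subset_compl_singleton_iff]
  by_contra! ⟨⟨w, hw⟩, v, hv⟩
  obtain ⟨p, hp⟩ := hF.preconnected.exists_isPath v w
  have hlength := hp.length_lt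
  have hspan := val_le_val_add_length_of_pathGraph_walk (p.map f)
  rw [Walk.length_map, hw, hv, Fin.val_last, Fin.val_zero] at hspan
  rw [Nat.card_eq_fintype_card] at hm
  omega

theorem card_hom_pathGraph_add_two (hF : F.Connected) {m : ℕ} (hm : Nat.card U ≤ m + 1) :
    Nat.card (F →g pathGraph (m + 2)) + Nat.card (F →g pathGraph m) =
      2 * Nat.card (F →g pathGraph (m + 1)) := by
  let initial := pathGraphCastSucc (m + 1)
  let final := pathGraphSucc (m + 1)
  let middle := initial.comp (pathGraphSucc m)
  let homsInto {l : ℕ} (e : pathGraph l ↪g pathGraph (m + 2)) : Set (F →g pathGraph (m + 2)) :=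
    {f | Set.range f ⊆ Set.range e}
  have hcard {l : ℕ} (e : pathGraph l ↪g pathGraph (m + 2)) :
      (homsInto e).ncard = Nat.card (F →g pathGraph l) := card_hom_range_subset_range e
  have hunion : homsInto initial ∪ homsInto final = Set.univ :=
    Set.eq_univ_of_forall (range_hom_subset_castSucc_or_succ hF hm)
  have hinter : homsInto initial ∩ homsInto final = homsInto middle := by
    ext f
    simp only [homsInto, middle, initial, final, Set.mem_inter_iff, Set.mem_ofPred_eq,
      range_pathGraphCastSucc_comp_pathGraphSucc, Set.subset_inter_iff]
  have := Set.ncard_union_add_ncard_inter (homsInto initial) (homsInto final)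
  rwa [hunion, hinter, Set.ncard_univ, hcard, hcard, hcard, ← two_mul] at this

theorem eq_add_mul_sub_of_second_difference_eq_zero {R : Type*} [CommRing R] {a : ℕ → R}
    (h : ∀ n, a (n + 2) + a n = 2 * a (n + 1)) (n : ℕ) : a n = a 0 + n * (a 1 - a 0) := by
  induction n using Nat.twoStepInduction with
  | zero => simp
  | one => simp
  | more n ih₀ ih₁ =>
    rw [eq_sub_of_add_eq (h n), ih₀, ih₁]
    push_cast
    ring

theorem card_hom_pathGraph (hF : F.Connected) {q m : ℕ} (hq : Nat.card U ≤ q + 1) (hm : q ≤ m) :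
    (Nat.card (F →g pathGraph m) : ℤ) = Nat.card (F →g pathGraph q) +
      (m - q) * (Nat.card (F →g pathGraph (q + 1)) - Nat.card (F →g pathGraph q)) := by
  obtain ⟨t, rfl⟩ := Nat.exists_eq_add_of_le hm
  have := eq_add_mul_sub_of_second_difference_eq_zero
    (a := fun t => (Nat.card (F →g pathGraph (q + t)) : ℤ))
    (fun n => mod_cast card_hom_pathGraph_add_two (m := q + n) hF (by omega)) t
  simpa using this

end PathGraph

section LinearForest

variable {U V W : Type*} [Finite V] [Finite W] {F : SimpleGraph U} {G : SimpleGraph V}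
  {G' : SimpleGraph W}

theorem card_eq_sum_ncard_supp [Fintype G.ConnectedComponent] :
    Nat.card V = ∑ c : G.ConnectedComponent, c.supp.ncard := by
  rw [← Nat.card_congr (Equiv.sigmaFiberEquiv G.connectedComponentMk), Nat.card_sigma]
  rfl

theorem card_hom_of_isLinearForest [Finite U] (hF : F.Connected) {q : ℕ}
    (hq : Nat.card U ≤ q + 1) (hG : IsLinearForest G)
    (hsupp : ∀ c : G.ConnectedComponent, q ≤ c.supp.ncard) :
    (Nat.card (F →g G) : ℤ) =
      Nat.card G.ConnectedComponent * Nat.card (F →g pathGraph q) +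
      (Nat.card V - q * Nat.card G.ConnectedComponent) *
        (Nat.card (F →g pathGraph (q + 1)) - Nat.card (F →g pathGraph q)) := by
  have := Fintype.ofFinite G.ConnectedComponent
  have hcomponent (c : G.ConnectedComponent) : (Nat.card (F →g c.toSimpleGraph) : ℤ) =
      Nat.card (F →g pathGraph q) + (c.supp.ncard - q) *
        (Nat.card (F →g pathGraph (q + 1)) - Nat.card (F →g pathGraph q)) := by
    obtain ⟨m, ⟨e : c.toSimpleGraph ≃g pathGraph m⟩⟩ := hG c
    have hm : c.supp.ncard = m := (Nat.card_congr e.toEquiv).trans (Nat.card_fin m)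
    rw [Nat.card_congr (Iso.homCongr Iso.refl e), hm]
    exact card_hom_pathGraph hF hq (hm ▸ hsupp c)
  rw [card_hom_eq_sum_connectedComponent hF, card_eq_sum_ncard_supp (G := G), Nat.cast_sum,
    Nat.cast_sum]
  simp only [hcomponent, Finset.sum_add_distrib, ← Finset.sum_mul, Finset.sum_sub_distrib,
    Finset.sum_const, Finset.card_univ, nsmul_eq_mul, Nat.card_eq_fintype_card, mul_comm (q : ℤ)]

theorem card_connectedComponent_add_ncard_edgeSet (hG : IsLinearForest G) :
    Nat.card G.ConnectedComponent + G.edgeSet.ncard = Nat.card V := by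
  have hone : Nat.card ((⊤ : SimpleGraph (Fin 2)) →g pathGraph 1) = 0 := by
    rw [card_hom_top_fin_two, Subsingleton.elim (pathGraph 1) ⊥]
    simp
  have htwo : Nat.card ((⊤ : SimpleGraph (Fin 2)) →g pathGraph (1 + 1)) = 2 := by
    rw [card_hom_top_fin_two, pathGraph_two_eq_top, Set.ncard_eq_toFinset_card', ← edgeFinset,
      card_edgeFinset_top_eq_card_choose_two]
    rfl
  have hedge := card_hom_of_isLinearForest (F := (⊤ : SimpleGraph (Fin 2))) connected_top (q := 1)
    (Nat.card_fin 2).le hG fun c => (Set.ncard_pos (Set.toFinite _)).2 c.nonempty_supp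
  rw [card_hom_top_fin_two, hone, htwo] at hedge
  push_cast at hedge
  omega

theorem card_hom_eq_of_isLinearForest [Finite U] (F : SimpleGraph U) {q : ℕ}
    (hq : Nat.card U ≤ q + 1) (hG : IsLinearForest G) (hG' : IsLinearForest G')
    (hcard : Nat.card V = Nat.card W) (hedges : G.edgeSet.ncard = G'.edgeSet.ncard)
    (hsupp : ∀ c : G.ConnectedComponent, q ≤ c.supp.ncard)
    (hsupp' : ∀ c : G'.ConnectedComponent, q ≤ c.supp.ncard) :
    Nat.card (F →g G) = Nat.card (F →g G') := by
  have := Fintype.ofFinite F.ConnectedComponent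
  have hcomponents : Nat.card G.ConnectedComponent = Nat.card G'.ConnectedComponent := by
    have := card_connectedComponent_add_ncard_edgeSet hG
    have := card_connectedComponent_add_ncard_edgeSet hG'
    omega
  rw [card_hom_eq_prod_connectedComponent, card_hom_eq_prod_connectedComponent]
  refine Finset.prod_congr rfl fun c _ => ?_
  have hc : Nat.card c.supp ≤ q + 1 := (Finite.card_subtype_le _).trans hq
  zify
  rw [card_hom_of_isLinearForest c.connected_toSimpleGraph hc hG hsupp,
    card_hom_of_isLinearForest c.connected_toSimpleGraph hc hG' hsupp', hcard, hcomponents]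

end LinearForest

section EmbeddingCounting

universe u

variable {U : Type u} {V W : Type*} {H : SimpleGraph U} {G : SimpleGraph V} {G' : SimpleGraph W}

theorem card_le_comap_ker_eq_card_hom_quotient {r : Setoid U} (hr : ∀ i j, H.Adj i j → ¬ r i j) :
    Nat.card {f : U → V // (H, r) ≤ (G.comap f, Setoid.ker f)} =
      Nat.card (H.map (Quotient.mk r) →g G) := by
  refine Nat.card_congr
    { toFun := fun f => ⟨Quotient.lift f.1 fun _ _ h => f.2.2 h, ?_⟩
      invFun := fun g => ⟨fun i => g (Quotient.mk r i), fun i j h => g.map_adj ?_,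
        fun {i j} h => congrArg g (Quotient.sound h)⟩
      left_inv := fun _ => rfl
      right_inv := fun g => ?_ }
  · rintro _ _ ⟨-, i, j, hij, rfl, rfl⟩
    exact f.2.1 hij
  · exact ⟨fun hq => hr i j h (Quotient.exact hq), i, j, h, rfl, rfl⟩
  · ext ⟨i⟩
    rfl

theorem not_le_comap_ker_of_adj {r : Setoid U} {i j : U} (hij : H.Adj i j) (hr : r i j)
    (f : U → V) : ¬ (H, r) ≤ (G.comap f, Setoid.ker f) :=
  fun h => G.ne_of_adj (h.1 hij) (h.2 hr)

theorem card_embedding_eq_card_comap_ker :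
    Nat.card (H ↪g G) = Nat.card {f : U → V // (G.comap f, Setoid.ker f) = (H, ⊥)} :=
  Nat.card_congr
    { toFun := fun f => ⟨f, Prod.ext f.comap_eq (Setoid.ker_eq_bot_iff.2 f.injective)⟩
      invFun := fun f => ⟨⟨f.1, Setoid.ker_eq_bot_iff.1 (congrArg Prod.snd f.2)⟩,
        fun {i j} => iff_of_eq (congrFun₂ (congrArg (fun p => p.1.Adj) f.2) i j)⟩
      left_inv := fun _ => rfl
      right_inv := fun _ => rfl }

theorem card_embedding_eq_of_card_hom_eq [Finite U] [Finite V] [Finite W]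
    (h : ∀ (X : Type u) [Finite X] (F : SimpleGraph X), Nat.card X ≤ Nat.card U →
      Nat.card (F →g G) = Nat.card (F →g G')) (H : SimpleGraph U) :
    Nat.card (H ↪g G) = Nat.card (H ↪g G') := by
  have : Finite (Setoid U) := .of_injective (fun r i j => r i j) fun _ _ h =>
    Setoid.ext fun i j => iff_of_eq (congrFun₂ h i j)
  rw [card_embedding_eq_card_comap_ker, card_embedding_eq_card_comap_ker]
  -- `(F, r) ≤ (G.comap f, ker f)` says that `f` induces a homomorphism to `G` from the quotient of
  -- `F` by `r`.
  refine card_fiber_eq_of_card_le_eq (fun ⟨F, r⟩ => ?_) (H, ⊥)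
  by_cases hr : ∀ i j, F.Adj i j → ¬ r i j
  · rw [card_le_comap_ker_eq_card_hom_quotient hr, card_le_comap_ker_eq_card_hom_quotient hr]
    exact h _ _ (Nat.card_le_card_of_surjective _ Quotient.mk_surjective)
  · push Not at hr
    obtain ⟨i, j, hij, hrij⟩ := hr
    simp only [not_le_comap_ker_of_adj hij hrij, Nat.card_of_isEmpty]

end EmbeddingCounting

section Deck

variable {U V W : Type*} {H : SimpleGraph U} {G : SimpleGraph V} {G' : SimpleGraph W}

theorem card_embedding_range_eq_card_iso (s : Set V) :
    Nat.card {f : H ↪g G // Set.range f = s} = Nat.card (G.induce s ≃g H) := by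
  refine (Nat.card_congr (Equiv.ofBijective (fun e : G.induce s ≃g H =>
    ⟨(Embedding.induce s).comp e.symm.toEmbedding, ?range⟩) ⟨?injective, ?surjective⟩)).symm
  case range =>
    exact (e.symm.surjective.range_comp Subtype.val).trans Subtype.range_coe
  case injective =>
    intro e e' h
    refine RelIso.symm_bijective.injective (RelIso.ext fun i => Subtype.ext ?_)
    exact DFunLike.congr_fun (congrArg Subtype.val h) i
  case surjective =>
    rintro ⟨f, rfl⟩
    exact ⟨f.isoInduceRange.symm, rfl⟩

theorem card_iso_eq_card_aut (e : G ≃g H) : Nat.card (G ≃g H) = Nat.card (H ≃g H) :=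
  Nat.card_congr
    { toFun := fun f => e.symm.trans f
      invFun := fun f => e.trans f
      left_inv := fun f => by ext; simp
      right_inv := fun f => by ext; simp }

theorem card_embedding_eq_copies_mul_card_aut [Finite U] [Fintype V] :
    Nat.card (H ↪g G) = copies G H * Nat.card (H ≃g H) := by
  classical
  have := Fintype.ofFinite U
  have hfiber (s : Finset V) : Nat.card {f : H ↪g G // (Set.range f).toFinset = s} =
      if Nonempty (G.induce (s : Set V) ≃g H) then Nat.card (H ≃g H) else 0 := by
    simp only [← Finset.coe_inj, Set.coe_toFinset, card_embedding_range_eq_card_iso]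
    split_ifs with h
    · exact card_iso_eq_card_aut h.some
    · have := not_nonempty_iff.1 h
      exact Nat.card_of_isEmpty
  have : Finite (H ↪g G) := DFunLike.finite _
  rw [← Nat.card_congr (Equiv.sigmaFiberEquiv fun f : H ↪g G => (Set.range f).toFinset),
    Nat.card_sigma, Finset.sum_congr rfl fun s _ => hfiber s, ← Finset.sum_filter,
    Finset.sum_const, smul_eq_mul, copies, Set.ncard_eq_toFinset_card', Set.toFinset_ofPred]

theorem copies_eq_of_card_embedding_eq [Finite U] [Fintype V] [Fintype W]
    (h : Nat.card (H ↪g G) = Nat.card (H ↪g G')) : copies G H = copies G' H := by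
  have : Finite (H ≃g H) := DFunLike.finite _
  have : Nonempty (H ≃g H) := ⟨Iso.refl⟩
  rw [card_embedding_eq_copies_mul_card_aut, card_embedding_eq_copies_mul_card_aut] at h
  exact Nat.eq_of_mul_eq_mul_right Nat.card_pos h

theorem ncard_card_eq_and_iso_eq_copies [Fintype V] {k : ℕ} (H : SimpleGraph (Fin k)) :
    {s : Finset V | s.card = k ∧ Nonempty (G.induce (s : Set V) ≃g H)}.ncard = copies G H := by
  refine congrArg Set.ncard (Set.ext fun s => and_iff_right_of_imp ?_)
  rintro ⟨e⟩
  simpa using Nat.card_congr e.toEquiv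

end Deck

/-- Linear forests with the same number of vertices and edges whose
components all have at least `k-1` vertices have the same `k`-deck. -/
theorem stmt_11 {V W : Type*} [Fintype V] [Fintype W] (k : ℕ)
    (G : SimpleGraph V) (G' : SimpleGraph W)
    (hGlf : IsLinearForest G) (hG'lf : IsLinearForest G')
    (hcard : Fintype.card V = Fintype.card W)
    (hedges : G.edgeSet.ncard = G'.edgeSet.ncard)
    (hG : ∀ c : G.ConnectedComponent, k - 1 ≤ c.supp.ncard)
    (hG' : ∀ c : G'.ConnectedComponent, k - 1 ≤ c.supp.ncard) :
    SameDeck G G' k := by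
  intro H
  rw [ncard_card_eq_and_iso_eq_copies, ncard_card_eq_and_iso_eq_copies]
  refine copies_eq_of_card_embedding_eq (card_embedding_eq_of_card_hom_eq (fun X _ F hX => ?_) H)
  have hq : Nat.card X ≤ k - 1 + 1 := by
    rw [Nat.card_fin] at hX
    omega
  rw [← Nat.card_eq_fintype_card, ← Nat.card_eq_fintype_card] at hcard
  exact card_hom_eq_of_isLinearForest F hq hGlf hG'lf hcard hedges hG hG'
end

section
/- Let L be a linear forest with k vertices, and let q, r be natural numbers with q ≥ k+1, q ≥ 3, and r ≥ k−1. Then s(P_{q+r}, L) = s(C_q + P_r, L). -/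
open SimpleGraph

/-!
Place the vertices of `C_q + P_r` in two rows, the cycle above the path, with the `i`-th vertex of
each row in column `i`. Reading the two rows one after the other gives `P_{q+r}`. The two graphs
differ in one edge only: the end of the upper row is joined to the start of the upper row in
`C_q + P_r`, and to the start of the lower row in `P_{q+r}`. If a vertex set `S` misses a column
`t`, then exchanging the rows to the left of column `t` turns one edge into the other and
disturbs nothing else. Choosing `t` from the occupied columns alone, which the exchange preserves,
makes this an involution on vertex sets. Since `|S| ≤ r + 1`, the only sets without a missing column
`t ≤ r` consist of one vertex in each of the columns `0, …, r`. Such a set avoids the end of the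
upper row because `|S| < q`, so both graphs already induce the same subgraph on it.
-/

open Finset

section Copies

variable {V V' W : Type*} {G : SimpleGraph V} {G' : SimpleGraph V'} {L : SimpleGraph W}

theorem card_eq_of_induce_iso [Fintype W] {S : Finset V} (e : G.induce (S : Set V) ≃g L) :
    #S = Fintype.card W := by
  simpa using Fintype.card_congr e.toEquiv

theorem nonempty_induce_iso_induce_map_s12 {S : Finset V} (f : V ≃ V')
    (hf : ∀ u ∈ S, ∀ v ∈ S, G'.Adj (f u) (f v) ↔ G.Adj u v) :
    Nonempty (G.induce (S : Set V) ≃g G'.induce (S.map f.toEmbedding : Set V')) :=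
  ⟨⟨f.subtypeEquiv fun v ↦ by simp, fun {u v} ↦ hf u u.2 v v.2⟩⟩

theorem copies_eq_of_bijective [Fintype V] [Fintype V'] {φ : Finset V → Finset V'}
    (hφ : Function.Bijective φ)
    (h : ∀ S : Finset V, Nonempty (G.induce (S : Set V) ≃g L) ↔
      Nonempty (G'.induce (φ S : Set V') ≃g L)) :
    copies G L = copies G' L := by
  have hpreimage : {S : Finset V | Nonempty (G.induce (S : Set V) ≃g L)} =
      φ ⁻¹' {T : Finset V' | Nonempty (G'.induce (T : Set V') ≃g L)} :=
    Set.ext h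
  rw [copies, copies, hpreimage]
  exact Set.ncard_preimage_of_injective_subset_range hφ.injective
    (hφ.surjective.range_eq ▸ Set.subset_univ _)

theorem copies_congr [Fintype V] [Fintype V'] (e : G ≃g G') : copies G L = copies G' L := by
  refine copies_eq_of_bijective e.toEquiv.finsetCongr.bijective fun S ↦ ?_
  obtain ⟨f⟩ := nonempty_induce_iso_induce_map_s12 (S := S) e.toEquiv fun _ _ _ _ ↦ e.map_adj_iff
  exact ⟨fun ⟨g⟩ ↦ ⟨f.symm.trans g⟩, fun ⟨g⟩ ↦ ⟨f.trans g⟩⟩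

theorem copies_eq_of_bijective_map [Fintype V] [Fintype V'] [Fintype W] (σ : Finset V → V ≃ V')
    (hσ : Function.Bijective fun S : Finset V ↦ S.map (σ S).toEmbedding)
    (hadj : ∀ S, #S = Fintype.card W →
      ∀ u ∈ S, ∀ v ∈ S, G'.Adj (σ S u) (σ S v) ↔ G.Adj u v) :
    copies G L = copies G' L := by
  refine copies_eq_of_bijective hσ fun S ↦ ⟨fun ⟨e⟩ ↦ ?_, fun ⟨e⟩ ↦ ?_⟩
  · obtain ⟨f⟩ := nonempty_induce_iso_induce_map_s12 (σ S) (hadj S (card_eq_of_induce_iso e))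
    exact ⟨f.symm.trans e⟩
  · have hS : #S = Fintype.card W := by simpa using card_eq_of_induce_iso e
    obtain ⟨f⟩ := nonempty_induce_iso_induce_map_s12 (σ S) (hadj S hS)
    exact ⟨f.trans e⟩

end Copies

section FirstGap

variable {r : ℕ} {C : Finset ℕ}

/-- The first `t ≤ r` missing from `C`. If there is none, the infimum of the empty set makes the
value `0`, for which the exchange of rows is the identity. -/
noncomputable def firstGap (r : ℕ) (C : Finset ℕ) : ℕ := sInf {t | t ≤ r ∧ t ∉ C}

theorem firstGap_eq_zero (h : range (r + 1) ⊆ C) : firstGap r C = 0 := by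
  have hempty : {t | t ≤ r ∧ t ∉ C} = ∅ :=
    Set.eq_empty_of_forall_notMem fun t ht ↦ ht.2 (h (mem_range_succ_iff.2 ht.1))
  rw [firstGap, hempty, Nat.sInf_empty]

theorem firstGap_le_and_notMem (h : ¬ range (r + 1) ⊆ C) :
    firstGap r C ≤ r ∧ firstGap r C ∉ C := by
  obtain ⟨t, htr, htC⟩ := not_subset.1 h
  exact Nat.sInf_mem (s := {t | t ≤ r ∧ t ∉ C}) ⟨t, mem_range_succ_iff.1 htr, htC⟩

theorem range_firstGap_subset (h : ¬ range (r + 1) ⊆ C) : range (firstGap r C) ⊆ C := by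
  intro s hs
  have hlt : s < firstGap r C := mem_range.1 hs
  by_contra hsC
  exact Nat.notMem_of_lt_sInf hlt ⟨hlt.le.trans (firstGap_le_and_notMem h).1, hsC⟩

theorem firstGap_le_card (h : ¬ range (r + 1) ⊆ C) : firstGap r C ≤ #C := by
  simpa using card_le_card (range_firstGap_subset h)

end FirstGap

section SwapBelow

variable {q r : ℕ}

/-- The column of a vertex, for the rows `Fin q` and `Fin r` aligned at their first vertices. -/
def column : Fin q ⊕ Fin r → ℕ
  | .inl i => i
  | .inr i => i

/-- Exchanges the two rows in the columns to the left of `t` that meet both rows. -/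
def swapBelowFun (t : ℕ) : Fin q ⊕ Fin r → Fin q ⊕ Fin r
  | .inl i => if h : i.1 < t ∧ i.1 < r then .inr (i.castLT h.2) else .inl i
  | .inr i => if h : i.1 < t ∧ i.1 < q then .inl (i.castLT h.2) else .inr i

theorem column_swapBelowFun (t : ℕ) (v : Fin q ⊕ Fin r) :
    column (swapBelowFun t v) = column v := by
  rcases v with i | i <;> simp only [swapBelowFun] <;> split_ifs <;> rfl

theorem swapBelowFun_involutive (t : ℕ) :
    Function.Involutive (swapBelowFun t : Fin q ⊕ Fin r → Fin q ⊕ Fin r) := by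
  rintro (i | i) <;> simp only [swapBelowFun] <;> split_ifs with h <;> simp [Fin.castLT, h]

/-- The exchange of rows `swapBelowFun` as a permutation of the vertices. -/
def swapBelow (t : ℕ) : Equiv.Perm (Fin q ⊕ Fin r) := (swapBelowFun_involutive t).toPerm

theorem swapBelow_zero : (swapBelow 0 : Equiv.Perm (Fin q ⊕ Fin r)) = 1 := by
  ext (i | i) <;> simp [swapBelow, swapBelowFun]

theorem image_column_map_swapBelow (t : ℕ) (S : Finset (Fin q ⊕ Fin r)) :
    (S.map (swapBelow t).toEmbedding).image column = S.image column := by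
  rw [map_eq_image, image_image]
  exact image_congr fun v _ ↦ column_swapBelowFun t v

/-- The exchange of rows to the left of the first column `t ≤ r` that `S` misses. -/
noncomputable def swapFirstGap (S : Finset (Fin q ⊕ Fin r)) : Equiv.Perm (Fin q ⊕ Fin r) :=
  swapBelow (firstGap r (S.image column))

theorem map_swapFirstGap_involutive :
    Function.Involutive fun S : Finset (Fin q ⊕ Fin r) ↦ S.map (swapFirstGap S).toEmbedding := by
  intro S
  have hgap : swapFirstGap (S.map (swapFirstGap S).toEmbedding) = swapFirstGap S := by
    rw [swapFirstGap, swapFirstGap, image_column_map_swapBelow]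
  have hinv : Function.Involutive (swapFirstGap S) := swapBelowFun_involutive _
  simp only [hgap]
  simp only [map_eq_image, image_image, Equiv.coe_toEmbedding, hinv.comp_self, image_id]

end SwapBelow

section Adjacency

variable {q r : ℕ}

theorem cycleGraph_adj_iff_val {i j : Fin q} : (cycleGraph q).Adj i j ↔ i ≠ j ∧
    (i.1 + 1 = j ∨ j.1 + 1 = i ∨ (i.1 = 0 ∧ j.1 + 1 = q) ∨ (j.1 = 0 ∧ i.1 + 1 = q)) := by
  rw [cycleGraph_adj', Ne, Fin.ext_iff]
  rcases lt_trichotomy i j with h | rfl | h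
  · rw [Fin.coe_sub_iff_lt.2 h, Fin.coe_sub_iff_le.2 h.le]
    omega
  · simp [Fin.coe_sub_iff_le.2 le_rfl]
  · rw [Fin.coe_sub_iff_lt.2 h, Fin.coe_sub_iff_le.2 h.le]
    omega

/-- `P_{q+r}` on the vertices of `C_q + P_r`, its first `q` vertices being those of the cycle. -/
def rowPath (q r : ℕ) : SimpleGraph (Fin q ⊕ Fin r) := (pathGraph (q + r)).comap finSumFinEquiv

theorem rowPath_adj_inl_inl {i j : Fin q} :
    (rowPath q r).Adj (.inl i) (.inl j) ↔ i.1 + 1 = j ∨ j.1 + 1 = i := by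
  simp [rowPath, pathGraph_adj]

theorem rowPath_adj_inr_inr {i j : Fin r} :
    (rowPath q r).Adj (.inr i) (.inr j) ↔ i.1 + 1 = j ∨ j.1 + 1 = i := by
  simp [rowPath, pathGraph_adj, add_assoc]

theorem rowPath_adj_inl_inr {i : Fin q} {j : Fin r} :
    (rowPath q r).Adj (.inl i) (.inr j) ↔ i.1 + 1 = q ∧ j.1 = 0 := by
  simp only [rowPath, comap_adj, finSumFinEquiv_apply_left, finSumFinEquiv_apply_right,
    pathGraph_adj, Fin.val_castAdd, Fin.val_natAdd]
  omega

theorem rowPath_adj_inr_inl {i : Fin r} {j : Fin q} :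
    (rowPath q r).Adj (.inr i) (.inl j) ↔ j.1 + 1 = q ∧ i.1 = 0 := by
  rw [adj_comm, rowPath_adj_inl_inr]

theorem rowPath_adj_iff_of_ne_last {u v : Fin q ⊕ Fin r}
    (hu : ∀ i, u = .inl i → i.1 + 1 ≠ q) (hv : ∀ i, v = .inl i → i.1 + 1 ≠ q) :
    (rowPath q r).Adj u v ↔ (cycleGraph q ⊕g pathGraph r).Adj u v := by
  rcases u with i | i <;> rcases v with j | j <;>
    simp only [reduceCtorEq, Sum.inl.injEq, forall_eq', false_imp_iff, implies_true] at hu hv <;>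
    simp only [rowPath_adj_inl_inl, rowPath_adj_inl_inr, rowPath_adj_inr_inl, rowPath_adj_inr_inr,
      SimpleGraph.sum_adj, iff_false, cycleGraph_adj_iff_val, pathGraph_adj,
      ne_eq, Fin.ext_iff] <;>
    omega

theorem rowPath_adj_swapBelow_iff_of_column_ne {t : ℕ} (htr : t ≤ r) (htq : t < q)
    {u v : Fin q ⊕ Fin r} (hu : column u ≠ t) (hv : column v ≠ t) :
    (rowPath q r).Adj (swapBelow t u) (swapBelow t v) ↔
      (cycleGraph q ⊕g pathGraph r).Adj u v := by
  -- Edges inside a row never cross the empty column `t`. The edge joining the end of the upper row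
  -- to column `0` is the only one with one end moved and the other end fixed.
  rcases u with i | i <;> rcases v with j | j <;>
    simp only [column, swapBelow, Function.Involutive.coe_toPerm, swapBelowFun] at hu hv ⊢ <;>
    split_ifs <;>
    simp only [rowPath_adj_inl_inl, rowPath_adj_inl_inr, rowPath_adj_inr_inl, rowPath_adj_inr_inr,
      SimpleGraph.sum_adj, iff_false, cycleGraph_adj_iff_val, pathGraph_adj,
      Fin.val_castLT, ne_eq, Fin.ext_iff] <;>
    omega

theorem rowPath_adj_swapFirstGap_iff {S : Finset (Fin q ⊕ Fin r)} (hq : #S < q)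
    (hr : #S ≤ r + 1) {u v : Fin q ⊕ Fin r} (hu : u ∈ S) (hv : v ∈ S) :
    (rowPath q r).Adj (swapFirstGap S u) (swapFirstGap S v) ↔
      (cycleGraph q ⊕g pathGraph r).Adj u v := by
  have hcard : #(S.image column) ≤ #S := card_image_le
  by_cases hfull : range (r + 1) ⊆ S.image column
  · have hcolumns : S.image column = range (r + 1) :=
      (eq_of_subset_of_card_le hfull (by simpa using hcard.trans hr)).symm
    have hlt : r + 1 < q := by
      simpa [hcolumns] using hcard.trans_lt hq
    have hlast {w : Fin q ⊕ Fin r} (hw : w ∈ S) (i : Fin q) (hi : w = .inl i) : i.1 + 1 ≠ q := by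
      have hir : i.1 < r + 1 := by
        simpa [hcolumns, hi, column] using mem_image_of_mem column hw
      omega
    rw [swapFirstGap, firstGap_eq_zero hfull, swapBelow_zero]
    exact rowPath_adj_iff_of_ne_last (hlast hu) (hlast hv)
  · obtain ⟨hgap_le, hgap⟩ := firstGap_le_and_notMem hfull
    have hgap_lt := ((firstGap_le_card hfull).trans hcard).trans_lt hq
    exact rowPath_adj_swapBelow_iff_of_column_ne hgap_le hgap_lt
      (ne_of_mem_of_not_mem (mem_image_of_mem column hu) hgap)
      (ne_of_mem_of_not_mem (mem_image_of_mem column hv) hgap)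

end Adjacency

theorem stmt_12_general {W : Type*} [Fintype W] (L : SimpleGraph W) {q r : ℕ}
    (hq : Fintype.card W < q) (hr : Fintype.card W ≤ r + 1) :
    copies (pathGraph (q + r)) L = copies (cycleGraph q ⊕g pathGraph r) L :=
  calc copies (pathGraph (q + r)) L
    _ = copies (rowPath q r) L := (copies_congr (Iso.comap finSumFinEquiv _)).symm
    _ = copies (cycleGraph q ⊕g pathGraph r) L :=
      (copies_eq_of_bijective_map swapFirstGap map_swapFirstGap_involutive.bijective
        fun _ hS _ hu _ hv ↦ rowPath_adj_swapFirstGap_iff (hS ▸ hq) (hS ▸ hr) hu hv).symm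

/-- For a linear forest `L` with `k` vertices, if `q ≥ k+1`, `q ≥ 3`,
`r ≥ k-1`, then `s(P_{q+r}, L) = s(C_q + P_r, L)`. -/
theorem stmt_12 (k q r : ℕ) (L : SimpleGraph (Fin k)) (hL : IsLinearForest L)
    (hq : k + 1 ≤ q) (hq3 : 3 ≤ q) (hr : k - 1 ≤ r) :
    copies (pathGraph (q + r)) L = copies (cycleGraph q ⊕g pathGraph r) L :=
  stmt_12_general L (by simpa using hq) (by simpa using Nat.sub_le_iff_le_add.1 hr)
end

section
/- Let L be a linear forest with k vertices, and let G be a finite simple 2-regular graph with n vertices such that every connected component of G is a cycle with at least k+1 vertices. Then s(G, L) = s(C_n, L). In particular, the number of induced copies of L in such a graph depends only on L and n. -/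
open SimpleGraph

/-!
Let `G` and `G'` be `d`-regular graphs of equal order and girth larger than `k`. Building up a
forest one leaf or isolated vertex at a time, each leaf can be mapped in `d` ways and each isolated
vertex in `|V(G)|` ways, so a forest has as many homomorphisms to `G` as to `G'`.

Consider `k`-tuples of vertices, each with its type: which entries coincide and which are adjacent.
The tuples of type at least that of a given tuple `f` of `G` correspond to homomorphisms out of the
subgraph induced on the entries of `f`, which is a forest because the girth exceeds `k`. So `G` and
`G'` have equally many tuples of type at least `t` whenever `t` is attained, and Möbius inversion
over the types gives equally many tuples of each exact type. The tuples without repetition that pull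
back to `L` are the embeddings of `L`, and each induced copy of `L` arises from `|Aut L|` of them.

A cycle in a 2-regular graph fills its component, so components with more than `k` vertices force
girth larger than `k`, both for `G` and for `C_n`.
-/

section FiberCounting

variable {α β P : Type*} {f : α → P} {g : β → P} [Finite α] [Finite β]

theorem ncard_preimage_congr {s : Set P} (h : ∀ t ∈ s, (f ⁻¹' {t}).ncard = (g ⁻¹' {t}).ncard) :
    (f ⁻¹' s).ncard = (g ⁻¹' s).ncard := by
  have e (t : s) : {a // f a = t} ≃ {b // g b = t} := (Finite.card_eq.1 (h t t.2)).some
  exact Nat.card_congr <| (Equiv.sigmaSubtypeFiberEquivSubtype f fun _ ↦ Iff.rfl).symm.trans <|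
    (Equiv.sigmaCongrRight e).trans <| Equiv.sigmaSubtypeFiberEquivSubtype g fun _ ↦ Iff.rfl

theorem ncard_preimage_Ici [PartialOrder P] (f : α → P) (t : P) :
    (f ⁻¹' Set.Ici t).ncard = (f ⁻¹' {t}).ncard + (f ⁻¹' Set.Ioi t).ncard := by
  rw [← Set.Ioi_insert, Set.insert_eq, Set.preimage_union]
  exact Set.ncard_union_eq (Disjoint.preimage f <| by simp)

/-- Downward induction on `t`: the fibre over `t` is what remains of `f ⁻¹' Set.Ici t` after the
fibres over larger values are removed, and both fibres are empty if neither map attains `t`. -/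
theorem ncard_fiber_congr_of_ncard_preimage_Ici [PartialOrder P] [WellFoundedGT P]
    (hf : ∀ t ∈ Set.range f, (f ⁻¹' Set.Ici t).ncard = (g ⁻¹' Set.Ici t).ncard)
    (hg : ∀ t ∈ Set.range g, (f ⁻¹' Set.Ici t).ncard = (g ⁻¹' Set.Ici t).ncard) (t : P) :
    (f ⁻¹' {t}).ncard = (g ⁻¹' {t}).ncard := by
  induction t using WellFoundedGT.induction with
  | ind t ih =>
    by_cases ht : t ∈ Set.range f ∨ t ∈ Set.range g
    · have hIci := ht.elim (hf t) (hg t)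
      have hIoi : (f ⁻¹' Set.Ioi t).ncard = (g ⁻¹' Set.Ioi t).ncard := ncard_preimage_congr ih
      rw [ncard_preimage_Ici f, ncard_preimage_Ici g, hIoi] at hIci
      exact Nat.add_right_cancel hIci
    · rw [not_or] at ht
      rw [Set.preimage_singleton_eq_empty.2 ht.1, Set.preimage_singleton_eq_empty.2 ht.2,
        Set.ncard_empty, Set.ncard_empty]

end FiberCounting

section HomCounting

variable {U V W : Type*} {K : SimpleGraph U} {G : SimpleGraph V} {G' : SimpleGraph W}

theorem exists_subsingleton_neighborSet_of_isAcyclic [Finite K.edgeSet] [Nonempty U]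
    (hK : K.IsAcyclic) : ∃ v, (K.neighborSet v).Subsingleton := by
  obtain ⟨v, w, p, hp, hmax⟩ := Walk.exists_isPath_forall_isPath_length_le_length K
  have hsupport (x) (hx : K.Adj v x) : x ∈ p.support := by
    by_contra hxp
    simpa using hmax _ _ _ (hp.cons (h := hx.symm) hxp)
  have hsnd (x) (hx : K.Adj v x) : x = p.snd := hK.eq_snd_of_adj_start hp hx (hsupport x hx)
  exact ⟨v, fun x hx y hy ↦ (hsnd x hx).trans (hsnd y hy).symm⟩

open Classical in
/-- The extension of a homomorphism of `K - v` to `K` that sends `v` to `w`. -/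
noncomputable def homExtend {v : U} (g : K.induce {v}ᶜ →g G) (w : V)
    (hw : ∀ u : ({v}ᶜ : Set U), K.Adj v u → G.Adj w (g u)) : K →g G where
  toFun u := if hu : u = v then w else g ⟨u, hu⟩
  map_rel' {a b} hab := by
    by_cases ha : a = v <;> by_cases hb : b = v
    · exact absurd (ha.trans hb.symm) hab.ne
    · simpa [ha, hb] using hw ⟨b, hb⟩ (ha ▸ hab)
    · simpa [ha, hb] using (hw ⟨a, ha⟩ (hb ▸ hab.symm)).symm
    · simpa [ha, hb] using g.map_adj (v := ⟨a, ha⟩) (w := ⟨b, hb⟩) hab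

theorem ncard_hom_extending (v : U) (g : K.induce {v}ᶜ →g G) :
    {f : K →g G | f.comp (Embedding.induce {v}ᶜ).toHom = g}.ncard =
      {w | ∀ u : ({v}ᶜ : Set U), K.Adj v u → G.Adj w (g u)}.ncard := by
  refine Set.ncard_congr (fun f _ ↦ f v) ?_ ?_ ?_
  · rintro f rfl u hu
    exact f.map_adj hu
  · rintro f f' rfl hf' hv
    ext u
    obtain rfl | hu := eq_or_ne u v
    · exact hv
    · exact (DFunLike.congr_fun hf' ⟨u, hu⟩).symm
  · intro w hw
    refine ⟨homExtend g w hw, ?_, by simp [homExtend]⟩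
    ext u
    exact dif_neg u.2

variable [Finite U] [Finite V]

theorem card_hom_eq_mul_of_ncard_extension {v : U} {m : ℕ}
    (h : ∀ g : K.induce {v}ᶜ →g G,
      {w | ∀ u : ({v}ᶜ : Set U), K.Adj v u → G.Adj w (g u)}.ncard = m) :
    Nat.card (K →g G) = Nat.card (K.induce {v}ᶜ →g G) * m := by
  have := Fintype.ofFinite (K.induce {v}ᶜ →g G)
  let restrict (f : K →g G) := f.comp (Embedding.induce {v}ᶜ).toHom
  have hfiber (g) : Nat.card {f // restrict f = g} = m := (ncard_hom_extending v g).trans (h g)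
  rw [← Nat.card_congr (Equiv.sigmaFiberEquiv restrict), Nat.card_sigma]
  simp [hfiber]

theorem card_hom_of_neighborSet_eq_empty {v : U} (hv : K.neighborSet v = ∅) :
    Nat.card (K →g G) = Nat.card (K.induce {v}ᶜ →g G) * Nat.card V := by
  refine card_hom_eq_mul_of_ncard_extension fun g ↦ ?_
  have hadj (u) : ¬ K.Adj v u := Set.eq_empty_iff_forall_notMem.1 hv u
  simp [hadj]

theorem card_hom_of_neighborSet_eq_singleton {d : ℕ} (hG : ∀ w, (G.neighborSet w).ncard = d)
    {v u : U} (hv : K.neighborSet v = {u}) :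
    Nat.card (K →g G) = Nat.card (K.induce {v}ᶜ →g G) * d := by
  refine card_hom_eq_mul_of_ncard_extension fun g ↦ ?_
  have hadj (x) : K.Adj v x ↔ x = u := Set.ext_iff.1 hv x
  have hu : u ∈ ({v}ᶜ : Set U) := ((hadj u).2 rfl).ne'
  rw [← hG (g ⟨u, hu⟩)]
  congr 1
  ext w
  exact ⟨fun h ↦ (h ⟨u, hu⟩ ((hadj u).2 rfl)).symm, fun h x hx ↦ by
    obtain rfl : x = ⟨u, hu⟩ := Subtype.ext ((hadj x).1 hx)
    exact h.symm⟩

theorem card_hom_congr_of_isAcyclic [Finite W] {d : ℕ} (hcard : Nat.card V = Nat.card W)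
    (hG : ∀ v, (G.neighborSet v).ncard = d) (hG' : ∀ v, (G'.neighborSet v).ncard = d)
    (hK : K.IsAcyclic) : Nat.card (K →g G) = Nat.card (K →g G') := by
  induction hn : Nat.card U using Nat.strong_induction_on generalizing U with
  | h n ih =>
    obtain hU | hU := isEmpty_or_nonempty U
    · simp only [Nat.card_unique]
    obtain ⟨v, hv⟩ := exists_subsingleton_neighborSet_of_isAcyclic hK
    have hlt : Nat.card ({v}ᶜ : Set U) < n := hn ▸ Set.ncard_lt_card (by simp)
    have hdel := ih _ hlt (hK.induce {v}ᶜ) rfl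
    obtain hv | ⟨u, hv⟩ := hv.eq_empty_or_singleton
    · rw [card_hom_of_neighborSet_eq_empty hv, card_hom_of_neighborSet_eq_empty hv, hdel, hcard]
    · rw [card_hom_of_neighborSet_eq_singleton hG hv, card_hom_of_neighborSet_eq_singleton hG' hv,
        hdel]

end HomCounting

section Girth

variable {U V : Type*} {G : SimpleGraph V}

theorem isAcyclic_of_card_lt_egirth [Finite V] (h : Nat.card V < G.egirth) : G.IsAcyclic := by
  have := Fintype.ofFinite V
  by_contra hG
  obtain ⟨u, p, hp, hlength⟩ := exists_egirth_eq_length.2 hG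
  have hle : p.length ≤ Nat.card V := by
    rw [← Walk.length_tail_add_one hp.not_nil, Nat.card_eq_fintype_card]
    exact hp.isPath_tail.length_lt
  exact h.not_ge (hlength ▸ Nat.cast_le.2 hle)

theorem isAcyclic_induce_range_of_card_lt_egirth [Finite U] (h : Nat.card U < G.egirth)
    (f : U → V) : (G.induce (Set.range f)).IsAcyclic := by
  refine isAcyclic_of_card_lt_egirth ?_
  calc (Nat.card (Set.range f) : ℕ∞)
    _ ≤ Nat.card U := Nat.cast_le.2 (Finite.card_range_le f)
    _ < G.egirth := h
    _ ≤ (G.induce (Set.range f)).egirth := IsContained.egirth_le ⟨.induce G _⟩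

theorem exists_verts_toSubgraph_eq_supp_of_isCycles [LocallyFinite G] (hG : G.IsCycles) {u : V}
    {p : G.Walk u u} (hp : p.IsCycle) :
    ∃ c : G.ConnectedComponent, p.toSubgraph.verts = c.supp :=
  p.toSubgraph_connected.exists_verts_eq_connectedComponentSupp fun _ hv w ↦
    (hp.adj_toSubgraph_iff_of_isCycles hG hv w).2

theorem ncard_verts_toSubgraph_le_length {u : V} {p : G.Walk u u} (hp : ¬ p.Nil) :
    p.toSubgraph.verts.ncard ≤ p.length := by
  classical
  have hverts : p.toSubgraph.verts = p.support.tail.toFinset := by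
    ext w
    rw [Walk.mem_verts_toSubgraph, ← p.cons_tail_support, List.mem_cons, List.coe_toFinset]
    exact or_iff_right_of_imp fun h ↦ h ▸ p.end_mem_tail_support hp
  rw [hverts, Set.ncard_coe_finset]
  simpa using p.support.tail.toFinset_card_le

theorem lt_egirth_of_isCycles [LocallyFinite G] (hG : G.IsCycles) {k : ℕ}
    (h : ∀ c : G.ConnectedComponent, k < c.supp.ncard) : k < G.egirth := by
  refine (ENat.add_one_le_iff (ENat.natCast_ne_top k)).1 (le_egirth.2 fun u p hp ↦ ?_)
  obtain ⟨c, hc⟩ := exists_verts_toSubgraph_eq_supp_of_isCycles hG hp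
  exact_mod_cast (h c).trans_le (hc ▸ ncard_verts_toSubgraph_le_length hp.not_nil)

end Girth

section EmbeddingCounting

variable {U V W X : Type*} {G : SimpleGraph V} {G' : SimpleGraph W}

/-- The kernel of a tuple `f` of vertices of `G` together with the graph pulled back along `f`:
it records which entries coincide and which are adjacent. Types are ordered by inclusion. -/
def pullbackType (G : SimpleGraph V) (f : X → V) : Setoid X × SimpleGraph X :=
  (Setoid.ker f, G.comap f)

theorem finite_setoid (X : Type*) [Finite X] : Finite (Setoid X) :=
  Finite.of_injective (fun r : Setoid X ↦ r.r) fun _ _ h ↦ Setoid.eq_iff_rel_eq.2 h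

theorem pullbackType_induce_rangeFactorization (f : X → V) :
    pullbackType (G.induce (Set.range f)) (Set.rangeFactorization f) = pullbackType G f := by
  refine Prod.ext ?_ rfl
  ext x y
  exact Subtype.ext_iff

theorem card_hom_eq_ncard_pullbackType_preimage_Ici {K : SimpleGraph U} {f : X → U}
    (hf : f.Surjective) (G : SimpleGraph V) :
    Nat.card (K →g G) = (pullbackType G ⁻¹' Set.Ici (pullbackType K f)).ncard := by
  have hmem (h : K →g G) : h ∘ f ∈ pullbackType G ⁻¹' Set.Ici (pullbackType K f) :=
    ⟨fun _ _ hxy ↦ congrArg h hxy, fun _ _ hxy ↦ h.map_adj hxy⟩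
  refine Nat.card_eq_of_bijective (fun h ↦ ⟨h ∘ f, hmem h⟩) ⟨fun h h' hh ↦ ?_, ?_⟩
  · exact DFunLike.coe_injective <| hf.injective_comp_right <| congrArg Subtype.val hh
  · rintro ⟨g, hker, hadj⟩
    have hfactor (x) : g (Function.surjInv hf (f x)) = g x :=
      hker (Function.surjInv_eq hf (f x))
    refine ⟨⟨g ∘ Function.surjInv hf, fun {a b} hab ↦ ?_⟩, Subtype.ext (funext hfactor)⟩
    have hab' : K.Adj (f (Function.surjInv hf a)) (f (Function.surjInv hf b)) := by
      rwa [Function.surjInv_eq hf, Function.surjInv_eq hf]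
    exact hadj hab'

theorem ncard_pullbackType_fiber_eq_card_embedding (L : SimpleGraph X) (G : SimpleGraph V) :
    (pullbackType G ⁻¹' {(⊥, L)}).ncard = Nat.card (L ↪g G) := by
  have hrange : Set.range (fun φ : L ↪g G ↦ (φ : X → V)) = pullbackType G ⁻¹' {(⊥, L)} := by
    ext f
    constructor
    · rintro ⟨φ, rfl⟩
      exact Prod.ext (Setoid.ker_eq_bot_iff.2 φ.injective) φ.comap_eq
    · intro hf
      obtain ⟨hker, rfl⟩ := Prod.ext_iff.1 hf
      exact ⟨Embedding.comap ⟨f, Setoid.ker_eq_bot_iff.1 hker⟩ G, rfl⟩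
  rw [← hrange]
  exact Nat.card_range_of_injective DFunLike.coe_injective

variable [Finite V] [Finite W] [Finite X] {d : ℕ}

/-- The tuples whose type lies above that of `f` are the homomorphisms out of the graph induced on
the range of `f`, which is too small to contain a cycle. -/
theorem ncard_pullbackType_preimage_Ici_congr (hcard : Nat.card V = Nat.card W)
    (hG : ∀ v, (G.neighborSet v).ncard = d) (hG' : ∀ v, (G'.neighborSet v).ncard = d)
    (hgirth : Nat.card X < G.egirth) (f : X → V) :
    ((pullbackType G : (X → V) → _) ⁻¹' Set.Ici (pullbackType G f)).ncard =
      (pullbackType G' ⁻¹' Set.Ici (pullbackType G f)).ncard := by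
  rw [← pullbackType_induce_rangeFactorization,
    ← card_hom_eq_ncard_pullbackType_preimage_Ici Set.rangeFactorization_surjective,
    ← card_hom_eq_ncard_pullbackType_preimage_Ici Set.rangeFactorization_surjective]
  exact card_hom_congr_of_isAcyclic hcard hG hG' (isAcyclic_induce_range_of_card_lt_egirth hgirth f)

theorem card_embedding_congr_of_card_lt_egirth (hcard : Nat.card V = Nat.card W)
    (hG : ∀ v, (G.neighborSet v).ncard = d) (hG' : ∀ v, (G'.neighborSet v).ncard = d)
    (hgirth : Nat.card X < G.egirth) (hgirth' : Nat.card X < G'.egirth) (L : SimpleGraph X) :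
    Nat.card (L ↪g G) = Nat.card (L ↪g G') := by
  have := finite_setoid X
  simp only [← ncard_pullbackType_fiber_eq_card_embedding]
  refine ncard_fiber_congr_of_ncard_preimage_Ici ?_ ?_ _
  · rintro _ ⟨f, rfl⟩
    exact ncard_pullbackType_preimage_Ici_congr hcard hG hG' hgirth f
  · rintro _ ⟨f, rfl⟩
    exact (ncard_pullbackType_preimage_Ici_congr hcard.symm hG' hG hgirth' f).symm

end EmbeddingCounting

section Copies

variable {U V W : Type*}

theorem copies_eq_ncard_set [Fintype V] (G : SimpleGraph V) (L : SimpleGraph U) :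
    copies G L = {s : Set V | Nonempty (G.induce s ≃g L)}.ncard := by
  rw [copies, ← Set.ncard_image_of_injective _ Finset.coe_injective]
  congr 1
  ext s
  constructor
  · rintro ⟨t, ht, rfl⟩
    exact ht
  · intro hs
    lift s to Finset V using s.toFinite
    exact ⟨s, hs, rfl⟩

theorem card_embedding_eq_copies_mul_card_iso [Fintype V] (G : SimpleGraph V)
    (L : SimpleGraph U) : Nat.card (L ↪g G) = copies G L * Nat.card (L ≃g L) := by
  let copySets : Set (Set V) := {s | Nonempty (G.induce s ≃g L)}
  let copyIso (s : copySets) : L ≃g G.induce s.1 := s.2.some.symm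
  let embed (x : copySets × (L ≃g L)) : L ↪g G :=
    (Embedding.induce x.1.1).comp (x.2.trans (copyIso x.1)).toRelEmbedding
  have range_embed (x) : Set.range (embed x) = x.1.1 := by
    change Set.range (Subtype.val ∘ (x.2.trans (copyIso x.1))) = x.1.1
    rw [(x.2.trans (copyIso x.1)).surjective.range_comp, Subtype.range_val]
  have bijective_embed : embed.Bijective := by
    refine ⟨?_, fun φ ↦ ?_⟩
    · rintro ⟨s, a⟩ ⟨t, b⟩ h
      obtain rfl : s = t := Subtype.ext <| by rw [← range_embed (s, a), h, range_embed]
      have hab (u) : a u = b u := (copyIso s).injective <| Subtype.ext <| DFunLike.congr_fun h u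
      exact Prod.ext rfl (RelIso.ext hab)
    · let s : copySets := ⟨Set.range φ, ⟨φ.isoInduceRange.symm⟩⟩
      refine ⟨(s, φ.isoInduceRange.trans (copyIso s).symm), RelEmbedding.ext fun u ↦ ?_⟩
      exact congrArg Subtype.val ((copyIso s).apply_symm_apply (φ.isoInduceRange u))
  rw [copies_eq_ncard_set, ← Nat.card_coe_set_eq, ← Nat.card_prod]
  exact (Nat.card_eq_of_bijective embed bijective_embed).symm

theorem copies_congr_of_card_lt_egirth [Finite U] [Fintype V] [Fintype W] {G : SimpleGraph V}
    {G' : SimpleGraph W} {d : ℕ} (hcard : Nat.card V = Nat.card W)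
    (hG : ∀ v, (G.neighborSet v).ncard = d) (hG' : ∀ v, (G'.neighborSet v).ncard = d)
    (hgirth : Nat.card U < G.egirth) (hgirth' : Nat.card U < G'.egirth) (L : SimpleGraph U) :
    copies G L = copies G' L := by
  have : Finite (L ≃g L) := DFunLike.finite _
  have : Nonempty (L ≃g L) := ⟨Iso.refl⟩
  refine Nat.eq_of_mul_eq_mul_right (Nat.card_pos (α := L ≃g L)) ?_
  rw [← card_embedding_eq_copies_mul_card_iso, ← card_embedding_eq_copies_mul_card_iso]
  exact card_embedding_congr_of_card_lt_egirth hcard hG hG' hgirth hgirth' L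

end Copies

section ComponentsAndCycles

theorem ncard_neighborSet_cycleGraph {n : ℕ} (hn : 3 ≤ n) (v : Fin n) :
    ((cycleGraph n).neighborSet v).ncard = 2 := by
  obtain ⟨n, rfl⟩ := Nat.exists_eq_add_of_le' hn
  rw [← Nat.card_coe_set_eq, Nat.card_eq_fintype_card, card_neighborSet_eq_degree,
    cycleGraph_degree_three_le]

theorem ncard_supp_of_preconnected {V : Type*} {G : SimpleGraph V} (hG : G.Preconnected)
    (c : G.ConnectedComponent) : c.supp.ncard = Nat.card V := by
  have := hG.subsingleton_connectedComponent
  have hsupp : c.supp = Set.univ :=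
    Set.eq_univ_of_forall fun v ↦ Subsingleton.elim (G.connectedComponentMk v) c
  rw [hsupp, Set.ncard_univ]

theorem ncard_neighborSet_lt_card {V : Type*} [Finite V] (G : SimpleGraph V) (v : V) :
    (G.neighborSet v).ncard < Nat.card V :=
  Set.ncard_lt_card <| (Set.ne_univ_iff_exists_notMem _).2 ⟨v, G.notMem_neighborSet_self⟩

theorem ncard_supp_of_compIsCycle {V : Type*} {G : SimpleGraph V} {c : G.ConnectedComponent}
    {m : ℕ} (h : CompIsCycle G c m) : c.supp.ncard = m := by
  obtain ⟨-, ⟨e⟩⟩ := h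
  rw [← Nat.card_coe_set_eq, Nat.card_congr e.toEquiv, Nat.card_fin]

end ComponentsAndCycles

theorem stmt_13_general {U V : Type*} [Finite U] [Fintype V] (L : SimpleGraph U)
    (G : SimpleGraph V) (hreg : ∀ v, (G.neighborSet v).ncard = 2)
    (hcomp : ∀ c : G.ConnectedComponent, Nat.card U < c.supp.ncard) :
    copies G L = copies (cycleGraph (Fintype.card V)) L := by
  classical
  have hpos (i : Fin (Fintype.card V)) : Nonempty V := Fintype.card_pos_iff.1 i.pos
  have hcycle (i) : ((cycleGraph (Fintype.card V)).neighborSet i).ncard = 2 := by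
    obtain ⟨v⟩ := hpos i
    refine ncard_neighborSet_cycleGraph (Nat.succ_le_of_lt ?_) i
    rw [← hreg v, ← Nat.card_eq_fintype_card]
    exact ncard_neighborSet_lt_card G v
  have hcomp' (c : (cycleGraph (Fintype.card V)).ConnectedComponent) :
      Nat.card U < c.supp.ncard := by
    obtain ⟨i⟩ := c.nonempty_supp
    obtain ⟨v⟩ := hpos i
    rw [ncard_supp_of_preconnected cycleGraph_preconnected, Nat.card_fin,
      ← Nat.card_eq_fintype_card]
    exact (hcomp (G.connectedComponentMk v)).trans_le (Set.ncard_le_card _)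
  refine copies_congr_of_card_lt_egirth (by simp) hreg hcycle ?_ ?_ L
  · exact lt_egirth_of_isCycles (fun v _ ↦ hreg v) hcomp
  · exact lt_egirth_of_isCycles (fun v _ ↦ hcycle v) hcomp'

/-- For a linear forest `L` with `k` vertices and a 2-regular graph `G`
with `n` vertices all of whose components are cycles with at least `k+1` vertices,
`s(G, L) = s(C_n, L)`; so this number depends only on `L` and `n`. -/
theorem stmt_13 {V : Type*} [Fintype V] (k n : ℕ)
    (L : SimpleGraph (Fin k)) (hL : IsLinearForest L)
    (G : SimpleGraph V) (hn : Fintype.card V = n)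
    (hreg : ∀ v, (G.neighborSet v).ncard = 2)
    (hcyc : ∀ c : G.ConnectedComponent, ∃ m, k + 1 ≤ m ∧ CompIsCycle G c m) :
    copies G L = copies (cycleGraph n) L := by
  subst hn
  refine stmt_13_general L G hreg fun c ↦ ?_
  obtain ⟨m, hm, hc⟩ := hcyc c
  rwa [Nat.card_fin, ncard_supp_of_compIsCycle hc]
end
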